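/- Suppose ℝ² = U₁ ∪ U₂ ∪ C where U₁ (bounded) and U₂ (unbounded) are disjoint open connected sets, C = ∂U₁ = ∂U₂ is compact, and every point of C is accessible from both U₁ and U₂. If C can be written as the union of two arcs K⁽¹⁾ and K⁽²⁾ (each homeomorphic to [0,1]) intersecting exactly in their two common endpoints, then C is homeomorphic to the circle S¹, and consequently the closure of U₁ is homeomorphic to the closed 2-dimensional disk. -/

import Mathlib

/-- Accessibility of a boundary point from an open set. -/
def Accessible {X : Type*} [TopologicalSpace X] (U : Set X) (x : X) : Prop :=
  ∃ φ : unitInterval → X, Continuous φ ∧ Function.Injective φ ∧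
    (∀ t, φ t ∈ closure U) ∧ (∀ t : unitInterval, (t : ℝ) < 1 → φ t ∈ U) ∧ φ 1 = x

/-!
The inside `U` of two arcs with common endpoints is a bounded domain with connected complement.
Continuous logarithms show that such a domain admits the square roots needed in Koebe's proof of the
Riemann mapping theorem, so `U` is the image of the unit disk under an injective holomorphic map.
By the length–area principle this map sends small crosscuts near a boundary point to sets of small
diameter; since the boundary of `U` is locally connected, these cut off small pieces of `U`, and the
map extends continuously to the closed disk. If the extension identified two points of the circle,
the chord between them would become a closed curve meeting the boundary of `U` in one point `x` and
separating the inside; but the boundary without `x`, being connected, joins the two sides. Hence the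
extension is a homeomorphism of the closed disk onto the closure of `U`.
-/

namespace PlaneTopology

open Bornology Complex ComplexConjugate Filter MeasureTheory Metric Set Topology

/-! ### Continuous logarithms -/

/-- `g` has a continuous logarithm on `K`. -/
def HasLog {X : Type*} [TopologicalSpace X] (K : Set X) (g : X → ℂ) : Prop :=
  ∃ L : X → ℂ, ContinuousOn L K ∧ ∀ z ∈ K, exp (L z) = g z

namespace HasLog

variable {X : Type*} [TopologicalSpace X] {K A B W : Set X} {g h : X → ℂ}

lemma congr (hg : HasLog K g) (hgh : EqOn g h K) : HasLog K h := by
  obtain ⟨L, hL, hexp⟩ := hg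
  exact ⟨L, hL, fun z hz => (hexp z hz).trans (hgh hz)⟩

lemma mono (hg : HasLog B g) (hAB : A ⊆ B) : HasLog A g := by
  obtain ⟨L, hL, hexp⟩ := hg
  exact ⟨L, hL.mono hAB, fun z hz => hexp z (hAB hz)⟩

lemma mul (hg : HasLog K g) (hh : HasLog K h) : HasLog K (fun z => g z * h z) := by
  obtain ⟨L, hL, hexpL⟩ := hg
  obtain ⟨M, hM, hexpM⟩ := hh
  exact ⟨fun z => L z + M z, hL.add hM, fun z hz => by rw [exp_add, hexpL z hz, hexpM z hz]⟩

lemma inv (hg : HasLog K g) : HasLog K (fun z => (g z)⁻¹) := by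
  obtain ⟨L, hL, hexp⟩ := hg
  exact ⟨fun z => -L z, hL.neg, fun z hz => by rw [exp_neg, hexp z hz]⟩

lemma const {c : ℂ} (hc : c ≠ 0) : HasLog K (fun _ => c) :=
  ⟨fun _ => log c, continuousOn_const, fun _ _ => exp_log hc⟩

lemma empty : HasLog ∅ g :=
  ⟨0, continuousOn_empty _, fun _ hz => hz.elim⟩

lemma of_norm_sub_one_lt (hg : ContinuousOn g K) (h1 : ∀ z ∈ K, ‖g z - 1‖ < 1) :
    HasLog K g := by
  have hs : ∀ z ∈ K, g z ∈ slitPlane := fun z hz => by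
    simpa using mem_slitPlane_of_norm_lt_one (h1 z hz)
  exact ⟨fun z => log (g z), hg.clog hs, fun z hz => exp_log (slitPlane_ne_zero (hs z hz))⟩

lemma exists_apply_eq (hg : HasLog K g) {x : X} (hx : x ∈ K) {c : ℂ} (hc : exp c = g x) :
    ∃ L : X → ℂ, ContinuousOn L K ∧ (∀ z ∈ K, exp (L z) = g z) ∧ L x = c := by
  obtain ⟨L, hL, hexp⟩ := hg
  refine ⟨fun z => L z + (c - L x), hL.add continuousOn_const, fun z hz => ?_, by ring⟩
  rw [exp_add, exp_sub, hexp z hz, hexp x hx, hc, div_self (hc ▸ exp_ne_zero c), mul_one]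

end HasLog

section

variable {X : Type*} [TopologicalSpace X] {A B S W : Set X} {g : X → ℂ}

lemma eqOn_of_exp_eqOn (hS : IsPreconnected S) {L M : X → ℂ} (hL : ContinuousOn L S)
    (hM : ContinuousOn M S) (hLM : ∀ z ∈ S, exp (L z) = exp (M z)) {x : X} (hx : x ∈ S)
    (hxLM : L x = M x) : EqOn L M S :=
  isCoveringMap_exp.eqOn_of_comp_eqOn hS hL hM (fun z hz => Subtype.ext (hLM z hz)) hx hxLM

lemma HasLog.union (hA : IsClosed A) (hB : IsClosed B) (hAB : IsPreconnected (A ∩ B))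
    (hgA : HasLog A g) (hgB : HasLog B g) : HasLog (A ∪ B) g := by
  classical
  obtain ⟨L, hL, hexpL⟩ := hgA
  obtain ⟨M, hM, hexpM, hLM⟩ : ∃ M : X → ℂ, ContinuousOn M B ∧ (∀ z ∈ B, exp (M z) = g z) ∧
      EqOn L M (A ∩ B) := by
    rcases (A ∩ B).eq_empty_or_nonempty with h0 | ⟨w, hw⟩
    · obtain ⟨M, hM, hexpM⟩ := hgB
      exact ⟨M, hM, hexpM, h0 ▸ eqOn_empty _ _⟩
    · obtain ⟨M, hM, hexpM, hMw⟩ := hgB.exists_apply_eq hw.2 (hexpL w hw.1)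
      exact ⟨M, hM, hexpM, eqOn_of_exp_eqOn hAB (hL.mono inter_subset_left)
        (hM.mono inter_subset_right) (fun z hz => (hexpL z hz.1).trans (hexpM z hz.2).symm)
        hw hMw.symm⟩
  have hNA : EqOn (A.piecewise L M) L A := piecewise_eqOn _ _ _
  have hNB : EqOn (A.piecewise L M) M B := by
    intro z hz
    by_cases hzA : z ∈ A
    · rw [hNA hzA, hLM ⟨hzA, hz⟩]
    · exact piecewise_eq_of_notMem _ _ _ hzA
  refine ⟨A.piecewise L M, (hL.congr hNA).union_of_isClosed (hM.congr hNB) hA hB, ?_⟩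
  rintro z (hz | hz)
  · rw [hNA hz, hexpL z hz]
  · rw [hNB hz, hexpM z hz]

/-- Logarithms on compact connected sets through a common point, normalized at that point, are
restrictions of each other and therefore glue. -/
lemma HasLog.of_forall_isCompact {x : X} (hx : x ∈ W)
    (hW : ∀ z ∈ W, ∃ K ⊆ W, IsCompact K ∧ IsPreconnected K ∧ x ∈ K ∧ K ∈ 𝓝 z)
    (hg : ∀ K ⊆ W, IsCompact K → HasLog K g) : HasLog W g := by
  obtain ⟨M, -, hexpM⟩ := hg {x} (singleton_subset_iff.2 hx) isCompact_singleton
  choose! K hKW hK hKc hxK hKn using hW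
  choose! L hL hexpL hLx using fun z hz =>
    (hg (K z) (hKW z hz) (hK z hz)).exists_apply_eq (hxK z hz) (hexpM x rfl)
  have hcompat : ∀ z ∈ W, ∀ y ∈ K z, L y y = L z y := by
    intro z hz y hy
    have hyW := hKW z hz hy
    obtain ⟨N, hN, hexpN, hNx⟩ := (hg (K y ∪ K z) (union_subset (hKW y hyW) (hKW z hz))
      ((hK y hyW).union (hK z hz))).exists_apply_eq (Or.inl (hxK y hyW)) (hexpM x rfl)
    have heq : ∀ v ∈ W, K v ⊆ K y ∪ K z → EqOn (L v) N (K v) := fun v hv hsub =>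
      eqOn_of_exp_eqOn (hKc v hv) (hL v hv) (hN.mono hsub)
        (fun u hu => (hexpL v hv u hu).trans (hexpN u (hsub hu)).symm) (hxK v hv)
        ((hLx v hv).trans hNx.symm)
    rw [heq y hyW subset_union_left (mem_of_mem_nhds (hKn y hyW)),
      heq z hz subset_union_right hy]
  refine ⟨fun z => L z z, fun z hz => ContinuousAt.continuousWithinAt ?_,
    fun z hz => hexpL z hz z (mem_of_mem_nhds (hKn z hz))⟩
  refine ((hL z hz).continuousAt (hKn z hz)).congr ?_
  filter_upwards [hKn z hz] with y hy using (hcompat z hz y hy).symm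

end

lemma exists_isCompact_isPreconnected_mem_nhds {E : Type*} [NormedAddCommGroup E]
    [NormedSpace ℝ E] [ProperSpace E] {W : Set E} (hW : IsOpen W) (hWc : IsConnected W)
    {x z : E} (hx : x ∈ W) (hz : z ∈ W) :
    ∃ K ⊆ W, IsCompact K ∧ IsPreconnected K ∧ x ∈ K ∧ K ∈ 𝓝 z := by
  obtain ⟨γ, hγ⟩ := (hW.isConnected_iff_isPathConnected.1 hWc).joinedIn x hx z hz
  obtain ⟨ε, hε, hεW⟩ := nhds_basis_closedBall.mem_iff.1 (hW.mem_nhds hz)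
  exact ⟨range γ ∪ closedBall z ε, union_subset (range_subset_iff.2 hγ) hεW,
    (isCompact_range γ.continuous).union (isCompact_closedBall z ε),
    IsPreconnected.union z ⟨1, γ.target⟩ (mem_closedBall_self hε.le)
      (isPreconnected_range γ.continuous) (convex_closedBall z ε).isPreconnected,
    Or.inl ⟨0, γ.source⟩, mem_of_superset (closedBall_mem_nhds z hε) subset_union_right⟩

lemma hasLog_univ {F : ℂ → ℂ} (hF : Continuous F) (hF0 : ∀ z, F z ≠ 0) : HasLog univ F := by
  have hsc : IsSimplyConnected (univ : Set ℂ) := by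
    have : ContractibleSpace (univ : Set ℂ) := convex_univ.contractibleSpace univ_nonempty
    exact (inferInstance : SimplyConnectedSpace (univ : Set ℂ))
  exact exists_continuousOn_eqOn_exp_comp hsc isOpen_univ hF.continuousOn
    fun ⟨z, _, hz⟩ => hF0 z hz

/-! ### Logarithms of linear functions and separation of points -/

section

variable {K V W : Set ℂ} {p q : ℂ}

lemma sub_ne_zero_of_mem_of_notMem {z : ℂ} (hz : z ∈ K) (hp : p ∉ K) : z - p ≠ 0 :=
  sub_ne_zero.2 (ne_of_mem_of_not_mem hz hp)

lemma hasLog_sub_of_subset_ball {c : ℂ} (hK : K ⊆ ball c (dist c p)) :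
    HasLog K (fun z => z - p) := by
  rcases K.eq_empty_or_nonempty with rfl | ⟨w, hw⟩
  · exact HasLog.empty
  have hcp : c - p ≠ 0 := sub_ne_zero.2 (dist_pos.1 (dist_nonneg.trans_lt (hK hw)))
  have hlog : HasLog K (fun z => (z - p) / (c - p)) := by
    refine HasLog.of_norm_sub_one_lt (by fun_prop) fun z hz => ?_
    rw [div_sub_one hcp, sub_sub_sub_cancel_right, norm_div, div_lt_one (norm_pos_iff.2 hcp),
      ← dist_eq_norm, ← dist_eq_norm]
    exact hK hz
  exact ((HasLog.const hcp).mul hlog).congr fun z _ => mul_div_cancel₀ _ hcp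

lemma eventually_hasLog_div (hK : IsCompact K) (hp : p ∉ K) :
    ∀ᶠ q in 𝓝 p, HasLog K (fun z => (z - q) / (z - p)) := by
  obtain ⟨ε, hε, hεK⟩ := Metric.isOpen_iff.1 hK.isClosed.isOpen_compl p hp
  filter_upwards [ball_mem_nhds p hε] with q hq
  have hne : ∀ z ∈ K, z - p ≠ 0 := fun z hz => sub_ne_zero_of_mem_of_notMem hz hp
  refine HasLog.of_norm_sub_one_lt (ContinuousOn.div (by fun_prop) (by fun_prop) hne)
    fun z hz => ?_
  rw [div_sub_one (hne z hz), sub_sub_sub_cancel_left, norm_div,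
    div_lt_one (norm_pos_iff.2 (hne z hz)), ← dist_eq_norm, ← dist_eq_norm, dist_comm p]
  exact lt_of_lt_of_le hq (not_lt.1 fun h => hεK h hz)

lemma eventually_hasLog_sub_iff (hK : IsCompact K) (hp : p ∉ K) :
    ∀ᶠ q in 𝓝 p, q ∉ K ∧ (HasLog K (fun z => z - q) ↔ HasLog K (fun z => z - p)) := by
  filter_upwards [eventually_hasLog_div hK hp, hK.isClosed.isOpen_compl.mem_nhds hp] with q hlog hq
  refine ⟨hq, fun h => (h.mul hlog.inv).congr fun z hz => ?_,
    fun h => (h.mul hlog).congr fun z hz => ?_⟩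
  · simp only [inv_div]
    exact mul_div_cancel₀ _ (sub_ne_zero_of_mem_of_notMem hz hq)
  · exact mul_div_cancel₀ _ (sub_ne_zero_of_mem_of_notMem hz hp)

lemma hasLog_div_of_isPreconnected (hK : IsCompact K) (hV : IsPreconnected V)
    (hVK : Disjoint V K) (hp : p ∈ V) (hq : q ∈ V) :
    HasLog K (fun z => (z - p) / (z - q)) := by
  refine hV.induction₂ (fun x y => HasLog K (fun z => (z - x) / (z - y))) ?_ ?_ ?_ hp hq
  · intro x hx
    filter_upwards [nhdsWithin_le_nhds (eventually_hasLog_div hK (disjoint_left.1 hVK hx))]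
      with y hy
    exact hy.inv.congr fun z _ => inv_div _ _
  · intro x y w _ hy _ hxy hyw
    exact (hxy.mul hyw).congr fun z hz =>
      div_mul_div_cancel₀ (sub_ne_zero_of_mem_of_notMem hz (disjoint_left.1 hVK hy))
  · intro x y _ _ hxy
    exact hxy.inv.congr fun z _ => inv_div _ _

lemma not_hasLog_sphere (p : ℂ) {R : ℝ} (hR : 0 < R) : ¬ HasLog (sphere p R) (fun z => z - p) := by
  rintro ⟨L, hL, hexp⟩
  have hmem : ∀ t : ℝ, circleMap p R t ∈ sphere p R := circleMap_mem_sphere p hR.le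
  set c : ℂ := L (circleMap p R 0)
  have hlift : EqOn (fun t : ℝ => L (circleMap p R t)) (fun t : ℝ => c + t * I) univ := by
    refine eqOn_of_exp_eqOn isPreconnected_univ
      (hL.comp_continuous (by fun_prop) hmem).continuousOn (by fun_prop) (fun t _ => ?_)
      (mem_univ 0) (by simp [c])
    rw [exp_add, hexp _ (hmem t), hexp _ (hmem 0)]
    simp [circleMap]
  have h2π := hlift (mem_univ (2 * Real.pi))
  have hperiod : circleMap p R (2 * Real.pi) = circleMap p R 0 := by simp [circleMap]
  simp [hperiod, c] at h2π

/-- A logarithm of `(z - p) / (z - q)` on `K`, extended to the plane by Tietze's theorem, lets one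
replace `z - p` inside `V` by a nonvanishing function. -/
lemma exists_continuous_ne_zero_eqOn_compl (hK : IsClosed K) (hVK : frontier V ⊆ K)
    (hp : p ∈ V) (hq : q ∉ V ∪ K) (hlog : HasLog K (fun z => (z - p) / (z - q))) :
    ∃ F : ℂ → ℂ, Continuous F ∧ (∀ z, F z ≠ 0) ∧ ∀ z ∉ V, F z = z - p := by
  classical
  obtain ⟨L, hL, hexp⟩ := hlog
  obtain ⟨M, hM⟩ := ContinuousMap.exists_restrict_eq hK ⟨K.domRestrict L, hL.domRestrict⟩
  have hML : ∀ z ∈ K, M z = L z := fun z hz => DFunLike.congr_fun hM ⟨z, hz⟩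
  refine ⟨V.piecewise (fun z => exp (M z) * (z - q)) (fun z => z - p), ?_, fun z => ?_,
    fun z hz => piecewise_eq_of_notMem _ _ _ hz⟩
  · refine Continuous.piecewise (fun z hz => ?_) (by fun_prop) (by fun_prop)
    rw [hML z (hVK hz), hexp z (hVK hz)]
    exact div_mul_cancel₀ _ (sub_ne_zero_of_mem_of_notMem (Or.inr (hVK hz)) hq)
  · by_cases hz : z ∈ V
    · rw [piecewise_eq_of_mem _ _ _ hz]
      exact mul_ne_zero (exp_ne_zero _) (sub_ne_zero_of_mem_of_notMem (Or.inl hz) hq)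
    · rw [piecewise_eq_of_notMem _ _ _ hz]
      exact sub_ne_zero.2 (ne_of_mem_of_not_mem hp hz).symm

lemma not_hasLog_div_of_frontier_subset (hK : IsClosed K) (hV : IsBounded V)
    (hVK : frontier V ⊆ K) (hp : p ∈ V) (hq : q ∉ V ∪ K) :
    ¬ HasLog K (fun z => (z - p) / (z - q)) := by
  intro hlog
  obtain ⟨F, hF, hF0, hFV⟩ := exists_continuous_ne_zero_eqOn_compl hK hVK hp hq hlog
  obtain ⟨R, hR0, hR⟩ := hV.subset_ball_lt 0 p
  refine not_hasLog_sphere p hR0 (((hasLog_univ hF hF0).mono (subset_univ _)).congr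
    fun z hz => hFV z fun hzV => ?_)
  exact (mem_ball.1 (hR hzV)).ne (mem_sphere.1 hz)

/-! ### Sets without holes -/

/-- The points off `K` around which `K` winds: those for which `z - p` has no logarithm on `K`. -/
def windingSet (K : Set ℂ) : Set ℂ := {p | p ∉ K ∧ ¬ HasLog K (fun z => z - p)}

lemma isOpen_windingSet (hK : IsCompact K) : IsOpen (windingSet K) := by
  rw [isOpen_iff_mem_nhds]
  rintro p ⟨hp, hlog⟩
  filter_upwards [eventually_hasLog_sub_iff hK hp] with q hq
  exact ⟨hq.1, fun h => hlog (hq.2.1 h)⟩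

lemma isClosed_union_windingSet (hK : IsCompact K) : IsClosed (K ∪ windingSet K) := by
  rw [← isOpen_compl_iff, isOpen_iff_mem_nhds]
  intro p hp
  obtain ⟨hpK, hpV⟩ := not_or.1 hp
  have hlog : HasLog K (fun z => z - p) := by_contra fun h => hpV ⟨hpK, h⟩
  filter_upwards [eventually_hasLog_sub_iff hK hpK] with q hq
  exact not_or.2 ⟨hq.1, fun h => h.2 (hq.2.2 hlog)⟩

lemma windingSet_subset_closedBall {c : ℂ} {r : ℝ} (hK : K ⊆ closedBall c r) :
    windingSet K ⊆ closedBall c r := fun p hp => by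
  by_contra h
  refine hp.2 (hasLog_sub_of_subset_ball (hK.trans (closedBall_subset_ball ?_)))
  rwa [mem_closedBall, not_le, dist_comm] at h

lemma windingSet_subset_ball {c : ℂ} {r : ℝ} (hK : IsCompact K) (hKr : K ⊆ ball c r) :
    windingSet K ⊆ ball c r := by
  intro p hp
  obtain ⟨s, hsr, hs⟩ := exists_lt_subset_ball hK.isClosed hKr
  exact closedBall_subset_ball hsr
    (windingSet_subset_closedBall (hs.trans ball_subset_closedBall) hp)

/-- The complement of `W` has no nonempty compact relatively open subset inside the unit disk.
For `W` in the unit disk this says that the complement of `W` in the Riemann sphere is connected;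
being stated inside the disk, it transfers along homeomorphisms of the disk. -/
def NoHoles (W : Set ℂ) : Prop :=
  ∀ Q ⊆ ball (0 : ℂ) 1, IsCompact Q → ∀ O, IsOpen O → Q = O ∩ Wᶜ → Q = ∅

lemma NoHoles.hasLog_of_isCompact (hW : NoHoles W) (hWo : IsOpen W) (hW1 : W ⊆ ball 0 1)
    (hK : IsCompact K) (hKW : K ⊆ W) (hp : p ∉ W) : HasLog K (fun z => z - p) := by
  have hV1 : windingSet K ⊆ ball 0 1 := windingSet_subset_ball hK (hKW.trans hW1)
  have heq : windingSet K ∩ Wᶜ = (K ∪ windingSet K) ∩ Wᶜ := by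
    rw [union_inter_distrib_right, (disjoint_compl_right_iff_subset.2 hKW).inter_eq, empty_union]
  have hVW : IsCompact (windingSet K ∩ Wᶜ) :=
    (isCompact_closedBall 0 1).of_isClosed_subset
      (heq ▸ (isClosed_union_windingSet hK).inter hWo.isClosed_compl)
      (inter_subset_left.trans (hV1.trans ball_subset_closedBall))
  by_contra hlog
  have hpV : p ∈ windingSet K ∩ Wᶜ := ⟨⟨fun h => hp (hKW h), hlog⟩, hp⟩
  rw [hW _ (inter_subset_left.trans hV1) hVW _ (isOpen_windingSet hK) rfl] at hpV
  exact hpV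

lemma NoHoles.hasLog (hW : NoHoles W) (hWo : IsOpen W) (hW1 : W ⊆ ball 0 1)
    (hWc : IsConnected W) (hp : p ∉ W) : HasLog W (fun z => z - p) := by
  obtain ⟨x, hx⟩ := hWc.nonempty
  exact HasLog.of_forall_isCompact hx
    (fun z hz => exists_isCompact_isPreconnected_mem_nhds hWo hWc hx hz)
    fun K hKW hK => hW.hasLog_of_isCompact hWo hW1 hK hKW hp

lemma NoHoles.exists_continuousOn_sq_eq (hW : NoHoles W) (hWo : IsOpen W) (hW1 : W ⊆ ball 0 1)
    (hWc : IsConnected W) (h0 : (0 : ℂ) ∉ W) :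
    ∃ s : ℂ → ℂ, ContinuousOn s W ∧ ∀ z ∈ W, s z ^ 2 = z := by
  obtain ⟨L, hL, hexp⟩ := hW.hasLog hWo hW1 hWc h0
  refine ⟨fun z => exp (L z / 2), (hL.div_const _).cexp, fun z hz => ?_⟩
  rw [← exp_nat_mul, Nat.cast_ofNat, mul_div_cancel₀ _ two_ne_zero, hexp z hz]
  exact sub_zero z

lemma NoHoles.image (hW : NoHoles W) (hW1 : W ⊆ ball 0 1) {φ χ : ℂ → ℂ}
    (hφ : ContinuousOn φ (ball 0 1)) (hχ : ContinuousOn χ (ball 0 1))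
    (hχm : MapsTo χ (ball 0 1) (ball 0 1)) (hinv : InvOn χ φ (ball 0 1) (ball 0 1)) :
    NoHoles (φ '' W) := by
  intro Q hQ1 hQ O hO hQO
  have hχQ : χ '' Q = (ball 0 1 ∩ φ ⁻¹' O) ∩ Wᶜ := by
    ext z
    constructor
    · rintro ⟨q, hq, rfl⟩
      have hφχ : φ (χ q) = q := hinv.2 (hQ1 hq)
      refine ⟨⟨hχm (hQ1 hq), ?_⟩, fun hzW => (hQO.subset hq).2 ⟨_, hzW, hφχ⟩⟩
      rw [mem_preimage, hφχ]
      exact (hQO.subset hq).1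
    · rintro ⟨⟨hz1, hzO⟩, hzW⟩
      refine ⟨φ z, hQO.superset ⟨hzO, ?_⟩, hinv.1 hz1⟩
      rintro ⟨y, hy, hyz⟩
      exact hzW (hinv.1.injOn (hW1 hy) hz1 hyz ▸ hy)
  exact image_eq_empty.1 (hW (χ '' Q) (hχm.mono_left hQ1).image_subset
    (hQ.image_of_continuousOn (hχ.mono hQ1)) _ (hφ.isOpen_inter_preimage isOpen_ball hO) hχQ)

lemma NoHoles.subset_preimage_image {T : ℂ → ℂ} (hW : NoHoles (T '' W)) (hWo : IsOpen W)
    (hTc : Continuous T) (hTo : IsOpenMap T) (hT : MapsTo T (ball 0 1) (ball 0 1)) {Q O : Set ℂ}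
    (hQ1 : Q ⊆ ball 0 1) (hQ : IsCompact Q) (hO : IsOpen O) (hQO : Q = O ∩ Wᶜ) :
    Q ⊆ T ⁻¹' (T '' W) := by
  have hR : T '' (Q ∩ T ⁻¹' (T '' W)ᶜ) = T '' O ∩ (T '' W)ᶜ := by
    rw [image_inter_preimage]
    refine (inter_subset_inter_left _ (image_mono (hQO.subset.trans inter_subset_left))).antisymm ?_
    rintro _ ⟨⟨o, ho, rfl⟩, hoW⟩
    exact ⟨⟨o, hQO.superset ⟨ho, fun h => hoW ⟨o, h, rfl⟩⟩, rfl⟩, hoW⟩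
  have hcompact : IsCompact (Q ∩ T ⁻¹' (T '' W)ᶜ) :=
    hQ.inter_right ((hTo W hWo).isClosed_compl.preimage hTc)
  have hempty := image_eq_empty.1 (hW _ (hT.mono_left (inter_subset_left.trans hQ1)).image_subset
    (hcompact.image hTc) _ (hTo O hO) hR)
  exact fun z hz => by_contra fun h => hempty.subset ⟨hz, h⟩

/-- A hole `Q` of `W` avoids `W` and, since its image is not a hole of the image of `W`, lies in
`-W`; it is therefore both compact and open. -/
lemma NoHoles.of_image_sq (hW : NoHoles ((fun z : ℂ => z ^ 2) '' W)) (hWo : IsOpen W)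
    (hneg : ∀ z ∈ W, -z ∉ W) : NoHoles W := by
  intro Q hQ1 hQ O hO hQO
  have hsub := hW.subset_preimage_image hWo (continuous_pow 2) (isOpenQuotientMap_pow 2).isOpenMap
    (fun z hz => by simpa using hz) hQ1 hQ hO hQO
  have hQneg : Q = O ∩ Neg.neg ⁻¹' W := by
    refine Subset.antisymm (fun z hz => ⟨(hQO.subset hz).1, ?_⟩)
      fun z hz => hQO.superset ⟨hz.1, fun hzW => hneg z hzW hz.2⟩
    obtain ⟨w, hw, hwz⟩ := hsub hz
    rcases sq_eq_sq_iff_eq_or_eq_neg.1 hwz with rfl | rfl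
    · exact absurd hw (hQO.subset hz).2
    · simpa using hw
  have hQo : IsOpen Q := hQneg ▸ hO.inter (hWo.preimage continuous_neg)
  exact (isClopen_iff.1 ⟨hQ.isClosed, hQo⟩).resolve_right fun h => noncompact_univ ℂ (h ▸ hQ)

end

/-! ### Locally bounded families and Hurwitz's theorem -/

/-- Near each point of `U` the functions `F n` are eventually holomorphic and uniformly bounded.
Where and when this happens depends on the point, so that the domains of the `F n` need only exhaust
`U`. -/
def EventuallyLocallyBounded {ι : Type*} (F : ι → ℂ → ℂ) (l : Filter ι) (U : Set ℂ) : Prop :=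
  ∀ z ∈ U, ∃ r > 0, ∃ B, ∀ᶠ n in l,
    DifferentiableOn ℂ (F n) (ball z r) ∧ ∀ y ∈ ball z r, ‖F n y‖ ≤ B

namespace EventuallyLocallyBounded

variable {ι : Type*} {F : ι → ℂ → ℂ} {f : ℂ → ℂ} {U : Set ℂ} {z : ℂ}

lemma of_isOpen {l : Filter ι} {B : ℝ} (hU : IsOpen U) (hF : ∀ n, DifferentiableOn ℂ (F n) U)
    (hB : ∀ n, ∀ z ∈ U, ‖F n z‖ ≤ B) : EventuallyLocallyBounded F l U := fun z hz => by
  obtain ⟨r, hr, hrU⟩ := Metric.isOpen_iff.1 hU z hz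
  exact ⟨r, hr, B, .of_forall fun n => ⟨(hF n).mono hrU, fun y hy => hB n y (hrU hy)⟩⟩

lemma mono {l l' : Filter ι} (hF : EventuallyLocallyBounded F l U) (hl : l' ≤ l) :
    EventuallyLocallyBounded F l' U := fun z hz => by
  obtain ⟨r, hr, B, hB⟩ := hF z hz
  exact ⟨r, hr, B, hl hB⟩

lemma exists_tendsto {l : Ultrafilter ι} (hF : EventuallyLocallyBounded F l U) :
    ∃ f : ℂ → ℂ, ∀ z ∈ U, Tendsto (fun n => F n z) l (𝓝 (f z)) := by
  have hlim : ∀ z, ∃ w, z ∈ U → Tendsto (fun n => F n z) l (𝓝 w) := fun z => by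
    by_cases hz : z ∈ U
    · obtain ⟨r, hr, B, hB⟩ := hF z hz
      obtain ⟨w, -, hw⟩ := (isCompact_closedBall (0 : ℂ) B).ultrafilter_le_nhds
        (l.map (F · z)) <| le_principal_iff.2 <| hB.mono fun n hn => by
          simpa using hn.2 z (mem_ball_self hr)
      exact ⟨w, fun _ => hw⟩
    · exact ⟨0, fun h => absurd h hz⟩
  choose f hf using hlim
  exact ⟨f, hf⟩

variable {l : Filter ι}

lemma tendsto_deriv (hF : EventuallyLocallyBounded F l U)
    (hf : TendstoLocallyUniformlyOn F f l U) (hU : U ∈ 𝓝 z) :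
    Tendsto (fun n => deriv (F n) z) l (𝓝 (deriv f z)) := by
  obtain ⟨r, hr, B, hB⟩ := hF z (mem_of_mem_nhds hU)
  obtain ⟨s, hs, hsU⟩ := Metric.mem_nhds_iff.1 (inter_mem hU (ball_mem_nhds z hr))
  exact ((hf.mono (hsU.trans inter_subset_left)).deriv
    (hB.mono fun n hn => hn.1.mono (hsU.trans inter_subset_right)) isOpen_ball).tendsto_at
    (mem_ball_self hs)

variable [l.NeBot]

lemma exists_eventually_lipschitz (hF : EventuallyLocallyBounded F l U) (hz : z ∈ U) :
    ∃ r > 0, ∃ C ≥ 0, ∀ᶠ n in l, ∀ y ∈ ball z r, dist (F n y) (F n z) ≤ C * dist y z := by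
  obtain ⟨r, hr, B, hB⟩ := hF z hz
  have hB0 : 0 ≤ B := by
    obtain ⟨n, -, hn⟩ := hB.exists
    exact (norm_nonneg _).trans (hn z (mem_ball_self hr))
  refine ⟨r, hr, (B + B) / r, by positivity, hB.mono fun n hn y hy => ?_⟩
  exact dist_le_div_mul_dist_of_mapsTo_ball hn.1 (fun w hw => (dist_le_norm_add_norm _ _).trans
    (add_le_add (hn.2 w hw) (hn.2 z (mem_ball_self hr)))) hy

lemma tendstoLocallyUniformlyOn (hF : EventuallyLocallyBounded F l U)
    (hf : ∀ z ∈ U, Tendsto (fun n => F n z) l (𝓝 (f z))) :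
    TendstoLocallyUniformlyOn F f l U := by
  rw [Metric.tendstoLocallyUniformlyOn_iff]
  intro ε hε z hz
  obtain ⟨r, hr, C, hC, hlip⟩ := hF.exists_eventually_lipschitz hz
  have hδ : 0 < ε / (3 * (C + 1)) := by positivity
  refine ⟨ball z (min r (ε / (3 * (C + 1)))) ∩ U,
    inter_mem (mem_nhdsWithin_of_mem_nhds (ball_mem_nhds z (lt_min hr hδ)))
      self_mem_nhdsWithin, ?_⟩
  have hsmall : ∀ y ∈ ball z (min r (ε / (3 * (C + 1)))), C * dist y z ≤ ε / 3 := fun y hy =>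
    calc C * dist y z ≤ (C + 1) * (ε / (3 * (C + 1))) := by
          gcongr
          · linarith
          · exact (hy.trans_le (min_le_right _ _)).le
      _ = ε / 3 := by field_simp
  have hlimit : ∀ y ∈ ball z (min r (ε / (3 * (C + 1)))) ∩ U, dist (f y) (f z) ≤ ε / 3 :=
    fun y hy => le_of_tendsto ((hf y hy.2).dist (hf z hz)) <| hlip.mono fun n hn =>
      (hn y (ball_subset_ball (min_le_left _ _) hy.1)).trans (hsmall y hy.1)
  filter_upwards [hlip, (Metric.tendsto_nhds.1 (hf z hz)) (ε / 3) (by positivity)]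
    with n hn hnz y hy
  have hny := (hn y (ball_subset_ball (min_le_left _ _) hy.1)).trans (hsmall y hy.1)
  calc dist (f y) (F n y) ≤ dist (f y) (f z) + dist (f z) (F n z) + dist (F n z) (F n y) :=
        dist_triangle4 _ _ _ _
    _ < ε := by linarith [hlimit y hy, dist_comm (f z) (F n z), dist_comm (F n z) (F n y)]

lemma differentiableAt (hF : EventuallyLocallyBounded F l U)
    (hf : TendstoLocallyUniformlyOn F f l U) (hU : U ∈ 𝓝 z) : DifferentiableAt ℂ f z := by
  obtain ⟨r, hr, B, hB⟩ := hF z (mem_of_mem_nhds hU)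
  obtain ⟨s, hs, hsU⟩ := Metric.mem_nhds_iff.1 (inter_mem hU (ball_mem_nhds z hr))
  exact ((hf.mono (hsU.trans inter_subset_left)).differentiableOn
    (hB.mono fun n hn => hn.1.mono (hsU.trans inter_subset_right)) isOpen_ball).differentiableAt
    (ball_mem_nhds z hs)

lemma differentiableOn (hF : EventuallyLocallyBounded F l U)
    (hf : TendstoLocallyUniformlyOn F f l U) (hU : IsOpen U) : DifferentiableOn ℂ f U :=
  fun _ hz => (hF.differentiableAt hf (hU.mem_nhds hz)).differentiableWithinAt

end EventuallyLocallyBounded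

lemma mem_image_closedBall_of_le_norm_sub {f : ℂ → ℂ} {c v : ℂ} {r ε : ℝ}
    (hf : DiffContOnCl ℂ f (ball c r)) (hr : 0 < r)
    (hsphere : ∀ z ∈ sphere c r, ε ≤ ‖f z - v‖) (hc : ‖f c - v‖ < ε) :
    v ∈ f '' closedBall c r := by
  by_contra hv
  have hne : ∀ z ∈ closure (ball c r), f z - v ≠ 0 := fun z hz h =>
    hv ⟨z, closure_ball_subset_closedBall hz, sub_eq_zero.1 h⟩
  have hε : 0 < ε := (norm_nonneg _).trans_lt hc
  have hmax := norm_le_of_forall_mem_frontier_norm_le isBounded_ball ((hf.sub_const v).inv hne)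
    (fun z hz => by
      rw [frontier_ball _ hr.ne'] at hz
      simpa using inv_anti₀ hε (hsphere z hz)) (subset_closure (mem_ball_self hr))
  have hc0 : 0 < ‖f c - v‖ := norm_pos_iff.2 (hne c (subset_closure (mem_ball_self hr)))
  rw [Pi.inv_apply, norm_inv, inv_le_inv₀ hc0 hε] at hmax
  exact hmax.not_gt hc

section Hurwitz

variable {ι : Type*} {l : Filter ι} [l.NeBot] {F : ι → ℂ → ℂ} {f : ℂ → ℂ} {U N : Set ℂ} {b : ℂ}

/-- **Hurwitz's theorem**. -/
lemma EventuallyLocallyBounded.eventually_mem_image (hF : EventuallyLocallyBounded F l U)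
    (hf : TendstoLocallyUniformlyOn F f l U) (hU : U ∈ 𝓝 b) (hN : N ∈ 𝓝 b)
    (hne : ∀ᶠ z in 𝓝[≠] b, f z ≠ f b) {v : ι → ℂ} (hv : Tendsto v l (𝓝 (f b))) :
    ∀ᶠ n in l, v n ∈ F n '' N := by
  obtain ⟨s, hs, B, hB⟩ := hF b (mem_of_mem_nhds hU)
  obtain ⟨r, hr, hrsub⟩ := nhds_basis_closedBall.mem_iff.1 <| inter_mem
    (inter_mem hU (ball_mem_nhds b hs)) (inter_mem hN (eventually_nhdsWithin_iff.1 hne))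
  have hdiff : ∀ᶠ n in l, DiffContOnCl ℂ (F n) (ball b r) := hB.mono fun n hn =>
    (hn.1.mono (by rw [closure_ball _ hr.ne']; exact fun z hz => (hrsub hz).1.2)).diffContOnCl
  have hunif := (tendstoLocallyUniformlyOn_iff_tendstoUniformlyOn_of_compact
    (isCompact_closedBall b r)).1 (hf.mono fun z hz => (hrsub hz).1.1)
  have hcont := hunif.continuousOn <| (hdiff.mono fun n hn =>
    closure_ball b hr.ne' ▸ hn.continuousOn).frequently
  obtain ⟨w, hw, hmin⟩ := (isCompact_sphere b r).exists_isMinOn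
    (NormedSpace.sphere_nonempty.2 hr.le)
    (((hcont.mono sphere_subset_closedBall).sub (continuousOn_const (c := f b))).norm)
  set m := ‖f w - f b‖
  have hm : 0 < m := norm_pos_iff.2 <| sub_ne_zero.2 <|
    (hrsub (sphere_subset_closedBall hw)).2.2 (ne_of_mem_sphere hw hr.ne')
  filter_upwards [Metric.tendstoUniformlyOn_iff.1 hunif (m / 4) (by positivity), hdiff,
    Metric.tendsto_nhds.1 hv (m / 4) (by positivity)] with n hnear hd hvn
  refine image_mono (fun z hz => (hrsub hz).2.1)
    (mem_image_closedBall_of_le_norm_sub (ε := m / 2) hd hr (fun z hz => ?_) ?_)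
  · have hmz : m ≤ dist (f z) (f b) := (hmin hz).trans_eq (dist_eq_norm _ _).symm
    rw [← dist_eq_norm]
    linarith [dist_triangle4 (f z) (F n z) (v n) (f b), hnear z (sphere_subset_closedBall hz)]
  · rw [← dist_eq_norm]
    linarith [dist_triangle (F n b) (f b) (v n), dist_comm (F n b) (f b), dist_comm (f b) (v n),
      hnear b (mem_closedBall_self hr.le)]

/-- The two zeros of `f - f a` would be approximated by two distinct zeros of `F n - F n a`. -/
lemma EventuallyLocallyBounded.injOn (hF : EventuallyLocallyBounded F l U)
    (hf : TendstoLocallyUniformlyOn F f l U) (hU : IsOpen U)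
    (hinj : ∀ a ∈ U, ∀ b ∈ U, ∃ V ∈ 𝓝 b, ∀ᶠ n in l, InjOn (F n) (insert a V))
    (hne : ∀ b ∈ U, ∀ c, ∀ᶠ z in 𝓝[≠] b, f z ≠ c) : InjOn f U := by
  intro a ha b hb hab
  by_contra hne'
  obtain ⟨V, hV, hinjV⟩ := hinj a ha b hb
  have hvalue := hF.eventually_mem_image hf (hU.mem_nhds hb)
    (inter_mem hV (isOpen_compl_singleton.mem_nhds (Ne.symm hne'))) (hne b hb _)
    (hab ▸ hf.tendsto_at ha)
  obtain ⟨n, ⟨z, ⟨hzV, hza⟩, hz⟩, hn⟩ := (hvalue.and hinjV).exists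
  exact hza (hn (Or.inr hzV) (Or.inl rfl) hz)

end Hurwitz

section OpenMapping

variable {f : ℂ → ℂ} {U : Set ℂ} {z : ℂ}

lemma image_mem_nhds_of_injOn (hf : AnalyticAt ℂ f z) (hU : U ∈ 𝓝 z) (hinj : InjOn f U) :
    f '' U ∈ 𝓝 (f z) := by
  rcases hf.eventually_constant_or_nhds_le_map_nhds with hconst | hopen
  · have hsub : U ∩ {y | f y = f z} ⊆ {z} := fun y hy => hinj hy.1 (mem_of_mem_nhds hU) hy.2
    exact absurd (finite_singleton z)
      (infinite_of_mem_nhds z (mem_of_superset (inter_mem hU hconst) hsub))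
  · exact hopen (image_mem_map hU)

lemma isOpen_image_of_injOn (hU : IsOpen U) (hf : DifferentiableOn ℂ f U) (hinj : InjOn f U) :
    IsOpen (f '' U) := isOpen_iff_mem_nhds.2 <| by
  rintro _ ⟨z, hz, rfl⟩
  exact image_mem_nhds_of_injOn (hf.analyticAt (hU.mem_nhds hz)) (hU.mem_nhds hz) hinj

lemma hasDerivAt_invFunOn (hf : DifferentiableOn ℂ f U) (hinj : InjOn f U) (hU : U ∈ 𝓝 z)
    (hd : deriv f z ≠ 0) : HasDerivAt (Function.invFunOn f U) (deriv f z)⁻¹ (f z) := by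
  have hleft : ∀ x ∈ U, Function.invFunOn f U (f x) = x := fun x hx => hinj.leftInvOn_invFunOn hx
  have hz := mem_of_mem_nhds hU
  have hcont : ContinuousAt (Function.invFunOn f U) (f z) := by
    rw [ContinuousAt, hleft z hz]
    intro s hs
    rw [mem_map]
    filter_upwards [image_mem_nhds_of_injOn (hf.analyticAt hU) (inter_mem hs hU)
      (hinj.mono inter_subset_right)]
    rintro _ ⟨x, hx, rfl⟩
    simpa only [mem_preimage, hleft x hx.2] using hx.1
  refine .of_local_left_inverse (f := f) hcont ?_ hd ?_
  · rw [hleft z hz]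
    exact (hf.differentiableAt hU).hasDerivAt
  · filter_upwards [image_mem_nhds_of_injOn (hf.analyticAt hU) hU hinj]
    rintro _ ⟨x, hx, rfl⟩
    rw [hleft x hx]

end OpenMapping

/-! ### Möbius transformations and Koebe's square root trick -/

/-- The Möbius automorphism of the unit disk sending `w` to `0`. -/
noncomputable def mobius (w z : ℂ) : ℂ := (z - w) / (1 - conj w * z)

section mobius

variable {w z : ℂ} {f : ℂ → ℂ} {W : Set ℂ}

@[simp] lemma mobius_self : mobius w w = 0 := by simp [mobius]

@[simp] lemma mobius_zero_right : mobius w 0 = -w := by simp [mobius]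

lemma mobius_denom_ne_zero (hw : ‖w‖ < 1) (hz : ‖z‖ < 1) : 1 - conj w * z ≠ 0 := by
  intro h
  have h1 : ‖w‖ * ‖z‖ = 1 := by simpa using congrArg norm (sub_eq_zero.1 h).symm
  nlinarith [norm_nonneg w, norm_nonneg z]

lemma norm_mobius_lt_one (hw : ‖w‖ < 1) (hz : ‖z‖ < 1) : ‖mobius w z‖ < 1 := by
  rw [mobius, norm_div, div_lt_one (norm_pos_iff.2 (mobius_denom_ne_zero hw hz))]
  refine lt_of_pow_lt_pow_left₀ 2 (norm_nonneg _) ?_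
  have hw2 : ‖w‖ ^ 2 < 1 := pow_lt_one₀ (norm_nonneg _) hw two_ne_zero
  have hz2 : ‖z‖ ^ 2 < 1 := pow_lt_one₀ (norm_nonneg _) hz two_ne_zero
  have key : ‖1 - conj w * z‖ ^ 2 - ‖z - w‖ ^ 2 = (1 - ‖w‖ ^ 2) * (1 - ‖z‖ ^ 2) := by
    simp only [← normSq_eq_norm_sq, normSq_apply, sub_re, sub_im, mul_re, mul_im, conj_re,
      conj_im, one_re, one_im]
    ring
  linarith [mul_pos (sub_pos.2 hw2) (sub_pos.2 hz2)]

lemma mapsTo_mobius (hw : ‖w‖ < 1) : MapsTo (mobius w) (ball 0 1) (ball 0 1) := fun z hz => by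
  rw [mem_ball_zero_iff] at hz ⊢
  exact norm_mobius_lt_one hw hz

lemma leftInvOn_mobius (hw : ‖w‖ < 1) : LeftInvOn (mobius (-w)) (mobius w) (ball 0 1) := by
  intro z hz
  rw [mem_ball_zero_iff] at hz
  have hden := mobius_denom_ne_zero hw hz
  have hden' := mobius_denom_ne_zero (by rwa [norm_neg]) (norm_mobius_lt_one hw hz) (w := -w)
  have hmul : mobius w z * (1 - conj w * z) = z - w := div_mul_cancel₀ _ hden
  rw [mobius, div_eq_iff hden', map_neg]
  linear_combination hmul

lemma invOn_mobius (hw : ‖w‖ < 1) : InvOn (mobius (-w)) (mobius w) (ball 0 1) (ball 0 1) :=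
  ⟨leftInvOn_mobius hw, by simpa using leftInvOn_mobius (w := -w) (by rwa [norm_neg])⟩

lemma hasDerivAt_mobius (hw : ‖w‖ < 1) (hz : ‖z‖ < 1) :
    HasDerivAt (mobius w) ((1 - conj w * w) / (1 - conj w * z) ^ 2) z := by
  have hnum : HasDerivAt (fun z => z - w) 1 z := (hasDerivAt_id z).sub_const w
  have hden : HasDerivAt (fun z => 1 - conj w * z) (-conj w) z := by
    simpa using ((hasDerivAt_id z).const_mul (conj w)).const_sub 1
  refine (hnum.div hden (mobius_denom_ne_zero hw hz)).congr_deriv ?_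
  ring

lemma continuousOn_mobius (hw : ‖w‖ < 1) : ContinuousOn (mobius w) (ball 0 1) := fun _ hz =>
  (hasDerivAt_mobius hw (mem_ball_zero_iff.1 hz)).continuousAt.continuousWithinAt

lemma norm_one_sub_conj_mul_self (hw : ‖w‖ ≤ 1) : ‖1 - conj w * w‖ = 1 - ‖w‖ ^ 2 := by
  rw [conj_mul', ← ofReal_pow, ← ofReal_one, ← ofReal_sub, norm_real, Real.norm_of_nonneg]
  exact sub_nonneg.2 (pow_le_one₀ (norm_nonneg _) hw)

lemma norm_deriv_mobius_comp (hw : ‖w‖ < 1) (hfz : ‖f z‖ < 1) (hf : DifferentiableAt ℂ f z) :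
    ‖deriv (mobius w ∘ f) z‖ = (1 - ‖w‖ ^ 2) / ‖1 - conj w * f z‖ ^ 2 * ‖deriv f z‖ := by
  rw [((hasDerivAt_mobius hw hfz).comp z hf.hasDerivAt).deriv, norm_mul, norm_div, norm_pow,
    norm_one_sub_conj_mul_self hw.le]

end mobius

lemma norm_deriv_of_sq_eq {f k : ℂ → ℂ} {z : ℂ} (hk : DifferentiableAt ℂ k z)
    (hkf : ∀ᶠ x in 𝓝 z, k x ^ 2 = f x) :
    ‖deriv f z‖ = 2 * ‖k z‖ * ‖deriv k z‖ := by
  have heq : f =ᶠ[𝓝 z] k ^ 2 := hkf.mono fun _ hx => hx.symm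
  simp [heq.deriv_eq, deriv_pow hk]

/-- `f` maps `U` injectively and conformally into the unit disk, onto a set without holes. -/
structure IsDiskEmbedding (U : Set ℂ) (f : ℂ → ℂ) : Prop where
  differentiableOn : DifferentiableOn ℂ f U
  injOn : InjOn f U
  mapsTo : MapsTo f U (ball 0 1)
  deriv_ne_zero : ∀ z ∈ U, deriv f z ≠ 0
  noHoles : NoHoles (f '' U)

namespace IsDiskEmbedding

variable {U : Set ℂ} {f k : ℂ → ℂ} {w z : ℂ}

lemma norm_lt_one (hf : IsDiskEmbedding U f) (hz : z ∈ U) : ‖f z‖ < 1 :=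
  mem_ball_zero_iff.1 (hf.mapsTo hz)

lemma differentiableAt (hf : IsDiskEmbedding U f) (hU : IsOpen U) (hz : z ∈ U) :
    DifferentiableAt ℂ f z := hf.differentiableOn.differentiableAt (hU.mem_nhds hz)

lemma mobius_comp (hf : IsDiskEmbedding U f) (hU : IsOpen U) (hw : ‖w‖ < 1) :
    IsDiskEmbedding U (mobius w ∘ f) where
  differentiableOn z hz := ((hasDerivAt_mobius hw (hf.norm_lt_one hz)).differentiableAt.comp z
    (hf.differentiableAt hU hz)).differentiableWithinAt
  injOn := (invOn_mobius hw).1.injOn.comp hf.injOn hf.mapsTo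
  mapsTo := (mapsTo_mobius hw).comp hf.mapsTo
  deriv_ne_zero z hz := by
    rw [← norm_pos_iff, norm_deriv_mobius_comp hw (hf.norm_lt_one hz) (hf.differentiableAt hU hz)]
    have hpos : 0 < 1 - ‖w‖ ^ 2 := sub_pos.2 (pow_lt_one₀ (norm_nonneg _) hw two_ne_zero)
    have := norm_pos_iff.2 (mobius_denom_ne_zero hw (hf.norm_lt_one hz))
    have := norm_pos_iff.2 (hf.deriv_ne_zero z hz)
    positivity
  noHoles := by
    rw [image_comp]
    exact hf.noHoles.image hf.mapsTo.image_subset (continuousOn_mobius hw)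
      (continuousOn_mobius (by rwa [norm_neg])) (mapsTo_mobius (by rwa [norm_neg]))
      (invOn_mobius hw)

lemma of_sq_eq (hf : IsDiskEmbedding U f) (hU : IsOpen U) (hk : DifferentiableOn ℂ k U)
    (hkf : ∀ z ∈ U, k z ^ 2 = f z) (h0 : ∀ z ∈ U, k z ≠ 0) : IsDiskEmbedding U k where
  differentiableOn := hk
  injOn x hx y hy hxy := hf.injOn hx hy (by rw [← hkf x hx, ← hkf y hy, hxy])
  mapsTo z hz := by
    have hlt := hf.norm_lt_one hz
    rw [← hkf z hz, norm_pow] at hlt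
    exact mem_ball_zero_iff.2 ((sq_lt_one_iff₀ (norm_nonneg _)).1 hlt)
  deriv_ne_zero z hz h := hf.deriv_ne_zero z hz <| by
    have heq : f =ᶠ[𝓝 z] k ^ 2 := (hU.eventually_mem hz).mono fun x hx => (hkf x hx).symm
    rw [heq.deriv_eq, deriv_pow (hk.differentiableAt (hU.mem_nhds hz)), h, mul_zero]
  noHoles := by
    have hsq : (fun z => z ^ 2) '' (k '' U) = f '' U := by rw [image_image, image_congr hkf]
    have hinj : InjOn k U := fun x hx y hy hxy =>
      hf.injOn hx hy (by rw [← hkf x hx, ← hkf y hy, hxy])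
    refine .of_image_sq (hsq ▸ hf.noHoles) (isOpen_image_of_injOn hU hk hinj) ?_
    rintro _ ⟨x, hx, rfl⟩ ⟨y, hy, hxy⟩
    obtain rfl : y = x := hf.injOn hy hx (by rw [← hkf x hx, ← hkf y hy, hxy, neg_sq])
    exact h0 y hy (self_eq_neg.1 hxy)

lemma exists_sq_eq (hf : IsDiskEmbedding U f) (hU : IsOpen U) (hUc : IsConnected U)
    (h0 : 0 ∉ f '' U) : ∃ k, IsDiskEmbedding U k ∧ ∀ z ∈ U, k z ^ 2 = f z := by
  have himage : IsOpen (f '' U) := isOpen_image_of_injOn hU hf.differentiableOn hf.injOn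
  obtain ⟨s, hs, hsq⟩ := hf.noHoles.exists_continuousOn_sq_eq himage hf.mapsTo.image_subset
    (hUc.image f hf.differentiableOn.continuousOn) h0
  have hs0 : ∀ y ∈ f '' U, s y ≠ 0 := fun y hy h => by
    have hy0 : y = 0 := by rw [← hsq y hy, h, zero_pow two_ne_zero]
    exact h0 (hy0 ▸ hy)
  have hsd : ∀ y ∈ f '' U, DifferentiableAt ℂ s y := fun y hy =>
    (HasDerivAt.of_local_left_inverse (f := fun z => z ^ 2) (hs.continuousAt (himage.mem_nhds hy))
      (hasDerivAt_pow 2 (s y)) (by simpa using hs0 y hy)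
      ((himage.eventually_mem hy).mono hsq)).differentiableAt
  have hsq' : ∀ z ∈ U, s (f z) ^ 2 = f z := fun z hz => hsq _ (mem_image_of_mem f hz)
  refine ⟨s ∘ f, hf.of_sq_eq hU (fun z hz => ?_) hsq' fun z hz => hs0 _ (mem_image_of_mem f hz),
    hsq'⟩
  exact ((hsd _ (mem_image_of_mem f hz)).comp z (hf.differentiableAt hU hz)).differentiableWithinAt

/-- **Koebe's square root trick**: move an omitted value `w` to the origin, take a square root and
move the image of `z` back to the origin. -/
lemma exists_larger_deriv (hf : IsDiskEmbedding U f) (hU : IsOpen U) (hUc : IsConnected U)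
    (hz : z ∈ U) (hfz : f z = 0) (hw : ‖w‖ < 1) (hwU : w ∉ f '' U) :
    ∃ g, IsDiskEmbedding U g ∧ g z = 0 ∧
      ‖deriv g z‖ = ‖deriv f z‖ * ((1 + ‖w‖) / (2 * √‖w‖)) := by
  have h0 : 0 ∉ mobius w ∘ f '' U := by
    rintro ⟨x, hx, hx0⟩
    refine hwU ⟨x, hx, (invOn_mobius hw).1.injOn (hf.mapsTo hx) (mem_ball_zero_iff.2 hw) ?_⟩
    rw [mobius_self, ← hx0, Function.comp_apply]
  have hh := hf.mobius_comp hU hw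
  obtain ⟨k, hk, hsq⟩ := hh.exists_sq_eq hU hUc h0
  have hkz : ‖k z‖ ^ 2 = ‖w‖ := by simp [← norm_pow, hsq z hz, hfz]
  have hkz' : ‖k z‖ = √‖w‖ := by rw [← hkz, Real.sqrt_sq (norm_nonneg _)]
  have hpos : 0 < √‖w‖ := by
    rw [Real.sqrt_pos, norm_pos_iff]
    rintro rfl
    exact hwU ⟨z, hz, hfz⟩
  have hw1 : 0 < 1 - ‖w‖ := sub_pos.2 hw
  refine ⟨mobius (k z) ∘ k, hk.mobius_comp hU (hk.norm_lt_one hz), by simp, ?_⟩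
  have hderiv := norm_deriv_of_sq_eq (hk.differentiableAt hU hz)
    ((hU.eventually_mem hz).mono hsq)
  rw [norm_deriv_mobius_comp hw (hf.norm_lt_one hz) (hf.differentiableAt hU hz), hfz, hkz']
    at hderiv
  rw [norm_deriv_mobius_comp (hk.norm_lt_one hz) (hk.norm_lt_one hz) (hk.differentiableAt hU hz),
    norm_one_sub_conj_mul_self (hk.norm_lt_one hz).le, hkz]
  simp only [mul_zero, sub_zero, norm_one, one_pow, div_one] at hderiv
  field_simp
  linear_combination -hderiv

end IsDiskEmbedding

/-! ### The Riemann map -/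

lemma noHoles_of_isPreconnected_compl {V : Set ℂ} (hV : IsPreconnected Vᶜ) (hV1 : V ⊆ ball 0 1) :
    NoHoles V := by
  intro Q hQ1 hQ O hO hQO
  by_contra hne
  obtain ⟨q, hq⟩ := nonempty_iff_ne_empty.2 hne
  have h1 : (1 : ℂ) ∉ ball 0 1 := by simp
  obtain ⟨z, hzV, hzO, hzQ⟩ := hV O Qᶜ hO hQ.isClosed.isOpen_compl
    (fun z _ => or_iff_not_imp_right.2 fun hzQ => (hQO.subset (not_not.1 hzQ)).1)
    ⟨q, (hQO.subset hq).2, (hQO.subset hq).1⟩ ⟨1, fun h => h1 (hV1 h), fun h => h1 (hQ1 h)⟩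
  exact hzQ (hQO.superset ⟨hzO, hzV⟩)

lemma exists_isDiskEmbedding {U : Set ℂ} (z₀ : ℂ) (hb : IsBounded U) (hUcc : IsPreconnected Uᶜ) :
    ∃ f, IsDiskEmbedding U f ∧ f z₀ = 0 := by
  obtain ⟨R, hR0, hR⟩ := hb.subset_ball_lt 0 z₀
  have hRc : (R : ℂ) ≠ 0 := ofReal_ne_zero.2 hR0.ne'
  have hfd : ∀ z, HasDerivAt (fun z => (z - z₀) / R) (1 / R : ℂ) z := fun z =>
    ((hasDerivAt_id z).sub_const z₀).div_const _
  have hbij : Function.Bijective fun z => (z - z₀) / R :=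
    ⟨fun x y hxy => sub_left_injective ((div_left_inj' hRc).1 hxy),
      fun y => ⟨y * R + z₀, by simp [hRc]⟩⟩
  have hmaps : MapsTo (fun z => (z - z₀) / R) U (ball 0 1) := fun z hz => by
    rw [mem_ball_zero_iff, norm_div, norm_real, Real.norm_of_nonneg hR0.le, div_lt_one hR0,
      ← dist_eq_norm]
    exact hR hz
  refine ⟨_, ⟨fun z _ => (hfd z).differentiableAt.differentiableWithinAt, hbij.1.injOn, hmaps,
    fun z _ => ?_, noHoles_of_isPreconnected_compl ?_ hmaps.image_subset⟩, by simp⟩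
  · rw [(hfd z).deriv]
    exact one_div_ne_zero hRc
  · rw [← image_compl_eq hbij]
    exact hUcc.image _ fun z _ => (hfd z).continuousAt.continuousWithinAt

/-- A maximizing sequence for `‖deriv f z₀‖`, with supremum `M`, among the disk embeddings `f` of
`U` that send `z₀` to the origin. -/
structure IsExtremalSeq (U : Set ℂ) (z₀ : ℂ) (M : ℝ) (f : ℕ → ℂ → ℂ) : Prop where
  isDiskEmbedding : ∀ n, IsDiskEmbedding U (f n)
  map_base : ∀ n, f n z₀ = 0
  norm_deriv_le : ∀ g, IsDiskEmbedding U g → g z₀ = 0 → ‖deriv g z₀‖ ≤ M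
  tendsto : Tendsto (fun n => ‖deriv (f n) z₀‖) atTop (𝓝 M)

lemma exists_isExtremalSeq {U : Set ℂ} {z₀ : ℂ} (hU : U ∈ 𝓝 z₀) (hb : IsBounded U)
    (hUcc : IsPreconnected Uᶜ) : ∃ M f, IsExtremalSeq U z₀ M f := by
  obtain ⟨ρ, hρ, hρU⟩ := Metric.mem_nhds_iff.1 hU
  set S : Set ℝ := {t | ∃ f, IsDiskEmbedding U f ∧ f z₀ = 0 ∧ ‖deriv f z₀‖ = t}
  have hS : BddAbove S := by
    refine ⟨1 / ρ, ?_⟩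
    rintro _ ⟨f, hf, hf0, rfl⟩
    refine norm_deriv_le_div_of_mapsTo_ball (hf.differentiableOn.mono hρU) (fun z hz => ?_) hρ
    exact hf0 ▸ ball_subset_closedBall (hf.mapsTo (hρU hz))
  obtain ⟨f₀, hf₀, hf₀0⟩ := exists_isDiskEmbedding z₀ hb hUcc
  obtain ⟨u, -, hu, huS⟩ := exists_seq_tendsto_sSup (S := S) ⟨_, f₀, hf₀, hf₀0, rfl⟩ hS
  choose f hf hf0 hfu using huS
  exact ⟨sSup S, f, hf, hf0, fun g hg hg0 => le_csSup hS ⟨g, hg, hg0, rfl⟩, by simpa only [hfu]⟩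

lemma antitoneOn_koebeFactor : AntitoneOn (fun x : ℝ => (1 + x) / (2 * √x)) (Ioc 0 1) := by
  intro x hx y hy hxy
  have hsx : 0 < √x := Real.sqrt_pos.2 hx.1
  have hsxy : √x ≤ √y := Real.sqrt_le_sqrt hxy
  have hsy0 : 0 < √y := hsx.trans_le hsxy
  have hsy : √y ≤ 1 := Real.sqrt_le_one.2 hy.2
  have key : 0 ≤ (√y - √x) * (1 - √x * √y) :=
    mul_nonneg (sub_nonneg.2 hsxy) (sub_nonneg.2 (mul_le_one₀ (hsxy.trans hsy) (by positivity) hsy))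
  rw [div_le_div_iff₀ (by positivity) (by positivity)]
  nlinarith [Real.sq_sqrt hx.1.le, Real.sq_sqrt hy.1.le]

lemma one_lt_koebeFactor {x : ℝ} (hx0 : 0 < x) (hx1 : x < 1) : 1 < (1 + x) / (2 * √x) := by
  rw [one_lt_div (mul_pos two_pos (Real.sqrt_pos.2 hx0))]
  have hne : 1 - √x ≠ 0 := sub_ne_zero.2 fun h => hx1.ne (Real.sqrt_eq_one.1 h.symm)
  nlinarith [Real.sq_sqrt hx0.le, sq_pos_of_ne_zero hne]

namespace IsExtremalSeq

variable {U : Set ℂ} {z₀ : ℂ} {M : ℝ} {f : ℕ → ℂ → ℂ}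

lemma pos (hf : IsExtremalSeq U z₀ M f) (hz₀ : z₀ ∈ U) : 0 < M :=
  (norm_pos_iff.2 ((hf.isDiskEmbedding 0).deriv_ne_zero z₀ hz₀)).trans_le
    (hf.norm_deriv_le _ (hf.isDiskEmbedding 0) (hf.map_base 0))

lemma eventually_ball_subset_image (hf : IsExtremalSeq U z₀ M f) (hU : IsOpen U)
    (hUc : IsConnected U) (hz₀ : z₀ ∈ U) {r : ℝ} (hr0 : 0 < r) (hr1 : r < 1) :
    ∀ᶠ n in atTop, ball 0 r ⊆ f n '' U := by
  set c := (1 + r) / (2 * √r)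
  have hc : 1 < c := one_lt_koebeFactor hr0 hr1
  filter_upwards [hf.tendsto.eventually (lt_mem_nhds (div_lt_self (hf.pos hz₀) hc))] with n hn w hw
  by_contra hwU
  rw [mem_ball_zero_iff] at hw
  have hw0 : 0 < ‖w‖ := by
    rw [norm_pos_iff]
    rintro rfl
    exact hwU ⟨z₀, hz₀, hf.map_base n⟩
  obtain ⟨g, hg, hg0, hgd⟩ :=
    (hf.isDiskEmbedding n).exists_larger_deriv hU hUc hz₀ (hf.map_base n) (hw.trans hr1) hwU
  have hfactor := antitoneOn_koebeFactor ⟨hw0, (hw.trans hr1).le⟩ ⟨hr0, hr1.le⟩ hw.le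
  refine (hf.norm_deriv_le g hg hg0).not_gt ?_
  calc M < ‖deriv (f n) z₀‖ * c := (div_lt_iff₀ (zero_lt_one.trans hc)).1 hn
    _ ≤ ‖deriv g z₀‖ := hgd ▸ mul_le_mul_of_nonneg_left hfactor (norm_nonneg _)

lemma eventuallyLocallyBounded_invFunOn (hf : IsExtremalSeq U z₀ M f) (hU : IsOpen U)
    (hUc : IsConnected U) (hz₀ : z₀ ∈ U) (hb : IsBounded U) :
    EventuallyLocallyBounded (fun n => Function.invFunOn (f n) U) atTop (ball 0 1) := by
  obtain ⟨R, hR⟩ := hb.exists_norm_le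
  intro z hz
  rw [mem_ball_zero_iff] at hz
  refine ⟨(1 - ‖z‖) / 2, by linarith, R, ?_⟩
  filter_upwards [hf.eventually_ball_subset_image hU hUc hz₀ (r := (1 + ‖z‖) / 2)
    (by positivity) (by linarith)] with n hn
  have hsub : ball z ((1 - ‖z‖) / 2) ⊆ f n '' U := (ball_subset_ball' (by
    rw [dist_zero_right]; linarith)).trans hn
  refine ⟨fun y hy => ?_, fun y hy => hR _ (Function.invFunOn_mem (hsub hy))⟩
  obtain ⟨x, hx, rfl⟩ := hsub hy
  have hfn := hf.isDiskEmbedding n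
  exact (hasDerivAt_invFunOn hfn.differentiableOn hfn.injOn (hU.mem_nhds hx)
    (hfn.deriv_ne_zero x hx)).differentiableAt.differentiableWithinAt

end IsExtremalSeq

lemma eventually_ne_of_deriv_ne_zero {U : Set ℂ} {f : ℂ → ℂ} {a b : ℂ} (hU : IsOpen U)
    (hUc : IsPreconnected U) (hf : DifferentiableOn ℂ f U) (ha : a ∈ U) (hb : b ∈ U)
    (hfa : deriv f a ≠ 0) (c : ℂ) : ∀ᶠ z in 𝓝[≠] b, f z ≠ c := by
  have hana := hf.analyticOnNhd hU
  refine ((hana b hb).eventually_eq_or_eventually_ne analyticAt_const).resolve_left fun h => hfa ?_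
  have hconst := hana.eqOn_of_preconnected_of_eventuallyEq analyticOnNhd_const hUc hb h
  rw [(hconst.eventuallyEq_of_mem (hU.mem_nhds ha)).deriv_eq, deriv_const]

section RiemannMap

variable {U : Set ℂ} {z₀ : ℂ} {M : ℝ} {f : ℕ → ℂ → ℂ} {ψ : ℂ → ℂ} {l : Filter ℕ} [l.NeBot]

namespace IsExtremalSeq

lemma deriv_limit_ne_zero (hf : IsExtremalSeq U z₀ M f) (hU : IsOpen U) (hz₀ : z₀ ∈ U)
    (hψ : Tendsto (fun n => deriv (Function.invFunOn (f n) U) 0) l (𝓝 (deriv ψ 0))) :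
    deriv ψ 0 ≠ 0 := by
  refine norm_pos_iff.1 ((inv_pos.2 (hf.pos hz₀)).trans_le (ge_of_tendsto' hψ.norm fun n => ?_))
  have hfn := hf.isDiskEmbedding n
  have hd := hfn.deriv_ne_zero z₀ hz₀
  rw [← hf.map_base n, (hasDerivAt_invFunOn hfn.differentiableOn hfn.injOn (hU.mem_nhds hz₀)
    hd).deriv, norm_inv]
  exact inv_anti₀ (norm_pos_iff.2 hd) (hf.norm_deriv_le _ hfn (hf.map_base n))

/-- If `F` is a limit of the `f n` then `‖F v‖ < 1` by the maximum principle, and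
`v = f n ⁻¹ (f n v)` tends to `ψ (F v)`. -/
lemma subset_image_limit {l : Ultrafilter ℕ} (hf : IsExtremalSeq U z₀ M f) (hU : IsOpen U)
    (hUc : IsPreconnected U) (hz₀ : z₀ ∈ U)
    (hψ : TendstoLocallyUniformlyOn (fun n => Function.invFunOn (f n) U) ψ l (ball 0 1))
    (hψc : ContinuousOn ψ (ball 0 1)) : U ⊆ ψ '' ball 0 1 := by
  have hfle : ∀ n, ∀ z ∈ U, ‖f n z‖ ≤ 1 := fun n z hz => ((hf.isDiskEmbedding n).norm_lt_one hz).le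
  have hbdd : EventuallyLocallyBounded f l U :=
    .of_isOpen hU (fun n => (hf.isDiskEmbedding n).differentiableOn) hfle
  obtain ⟨F, hF⟩ := hbdd.exists_tendsto
  have hFd := hbdd.differentiableOn (hbdd.tendstoLocallyUniformlyOn hF) hU
  have hFle : ∀ z ∈ U, ‖F z‖ ≤ 1 := fun z hz => le_of_tendsto' (hF z hz).norm (hfle · z hz)
  have hFz₀ : F z₀ = 0 :=
    tendsto_nhds_unique (hF z₀ hz₀) (by simpa only [hf.map_base] using tendsto_const_nhds)
  intro v hv
  have hFv : F v ∈ ball 0 1 := by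
    refine mem_ball_zero_iff.2 (lt_of_le_of_ne (hFle v hv) fun h => ?_)
    have hmax : IsMaxOn (norm ∘ F) U v := fun z hz => by simpa [h] using hFle z hz
    have heq := norm_eqOn_of_isPreconnected_of_isMaxOn hUc hU hFd hv hmax hz₀
    simp [hFz₀, h] at heq
  have hlim : Tendsto (fun n => Function.invFunOn (f n) U (f n v)) l (𝓝 (ψ (F v))) :=
    hψ.tendsto_comp (hψc _ hFv) hFv <| tendsto_nhdsWithin_iff.2
      ⟨hF v hv, (hF v hv).eventually (isOpen_ball.mem_nhds hFv)⟩
  refine ⟨F v, hFv, tendsto_nhds_unique hlim ?_⟩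
  simpa only [((hf.isDiskEmbedding _).injOn.leftInvOn_invFunOn hv)] using tendsto_const_nhds

end IsExtremalSeq

theorem exists_riemann_map (hU : IsOpen U) (hUc : IsConnected U) (hb : IsBounded U)
    (hUcc : IsPreconnected Uᶜ) :
    ∃ ψ : ℂ → ℂ, DifferentiableOn ℂ ψ (ball 0 1) ∧ InjOn ψ (ball 0 1) ∧ ψ '' ball 0 1 = U := by
  obtain ⟨z₀, hz₀⟩ := hUc.nonempty
  obtain ⟨M, f, hf⟩ := exists_isExtremalSeq (hU.mem_nhds hz₀) hb hUcc
  set g : ℕ → ℂ → ℂ := fun n => Function.invFunOn (f n) U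
  have hball : ∀ r < (1 : ℝ), 0 < r → ∀ᶠ n in (hyperfilter ℕ : Filter ℕ), ball 0 r ⊆ f n '' U :=
    fun r hr1 hr0 => Nat.hyperfilter_le_atTop (hf.eventually_ball_subset_image hU hUc hz₀ hr0 hr1)
  have hg : EventuallyLocallyBounded g (hyperfilter ℕ) (ball 0 1) :=
    (hf.eventuallyLocallyBounded_invFunOn hU hUc hz₀ hb).mono Nat.hyperfilter_le_atTop
  obtain ⟨ψ, hgψ⟩ := hg.exists_tendsto
  have hunif := hg.tendstoLocallyUniformlyOn hgψ
  have hψ := hg.differentiableOn hunif isOpen_ball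
  have hne : ∀ b ∈ ball (0 : ℂ) 1, ∀ c, ∀ᶠ z in 𝓝[≠] b, ψ z ≠ c := fun b hb =>
    eventually_ne_of_deriv_ne_zero isOpen_ball (convex_ball _ _).isPreconnected hψ
      (mem_ball_self one_pos) hb (hf.deriv_limit_ne_zero hU hz₀
        (hg.tendsto_deriv hunif (ball_mem_nhds 0 one_pos)))
  refine ⟨ψ, hψ, hg.injOn hunif isOpen_ball (fun a ha b hb => ?_) hne, Subset.antisymm ?_
    (hf.subset_image_limit hU hUc.isPreconnected hz₀ hunif hψ.continuousOn)⟩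
  · rw [mem_ball_zero_iff] at ha hb
    obtain ⟨r, hr, hr1⟩ := exists_between (max_lt ha hb)
    have har : a ∈ ball 0 r := mem_ball_zero_iff.2 ((le_max_left _ _).trans_lt hr)
    have hbr : b ∈ ball 0 r := mem_ball_zero_iff.2 ((le_max_right _ _).trans_lt hr)
    refine ⟨ball 0 r, isOpen_ball.mem_nhds hbr, ?_⟩
    filter_upwards [hball r hr1 (pos_of_mem_ball har)] with n hn
    exact (Function.invFunOn_injOn_image (f n) U).mono (insert_subset (hn har) hn)
  · rintro _ ⟨b, hb, rfl⟩
    obtain ⟨r, hr, hr1⟩ := exists_between (mem_ball_zero_iff.1 hb)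
    have hvalue := hg.eventually_mem_image hunif (isOpen_ball.mem_nhds hb)
      (isOpen_ball.mem_nhds (mem_ball_zero_iff.2 hr)) (hne b hb _) tendsto_const_nhds
    obtain ⟨n, ⟨z, hz, hzb⟩, hn⟩ :=
      (hvalue.and (hball r hr1 ((norm_nonneg b).trans_lt hr))).exists
    exact hzb ▸ Function.invFunOn_mem (hn hz)

end RiemannMap

/-! ### The length–area principle -/

lemma lintegral_norm_deriv_sq_eq_volume_image {U : Set ℂ} {φ : ℂ → ℂ} (hU : IsOpen U)
    (hd : DifferentiableOn ℂ φ U) (hi : InjOn φ U) :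
    ∫⁻ z in U, ENNReal.ofReal (‖deriv φ z‖ ^ 2) = volume (φ '' U) := by
  have hdet (c : ℂ) : (c • (1 : ℂ →L[ℝ] ℂ)).det = ‖c‖ ^ 2 := by
    rw [← normSq_eq_norm_sq, ← Algebra.norm_complex_apply, Algebra.norm_apply]
    rfl
  rw [← lintegral_abs_det_fderiv_eq_addHaar_image volume hU.measurableSet
    (f' := fun z => deriv φ z • (1 : ℂ →L[ℝ] ℂ)) (fun z hz =>
      (hd.differentiableAt (hU.mem_nhds hz)).hasDerivAt.complexToReal_fderiv.hasFDerivWithinAt) hi]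
  simp only [hdet, abs_pow, abs_norm]

lemma lintegral_ofReal_div_eq_top {c ρ : ℝ} (hc : 0 < c) (hρ : 0 < ρ) :
    ∫⁻ r in Ioc 0 ρ, ENNReal.ofReal (c / r) = ⊤ := by
  by_contra htop
  have hint : IntegrableOn (fun r => c / r) (Ioc 0 ρ) := by
    refine ⟨(measurable_const.div measurable_id).aestronglyMeasurable, ?_⟩
    rw [hasFiniteIntegral_iff_ofReal]
    · exact lt_top_iff_ne_top.2 htop
    · filter_upwards [ae_restrict_mem measurableSet_Ioc] with r hr
      exact div_nonneg hc.le hr.1.le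
  have hinv : IntervalIntegrable (fun r : ℝ => r⁻¹) volume 0 ρ := by
    rw [intervalIntegrable_iff_integrableOn_Ioc_of_le hρ.le]
    refine IntegrableOn.congr_fun (hint.const_mul c⁻¹) (fun r _ => ?_) measurableSet_Ioc
    field_simp
  exact (intervalIntegrable_inv_iff.1 hinv).elim hρ.ne fun h => h left_mem_uIcc

lemma sq_integral_le_mul_integral_sq {X : ℝ → ℝ} {a b : ℝ} (hab : a ≤ b)
    (hX : ContinuousOn X (uIcc a b)) :
    (∫ t in a..b, X t) ^ 2 ≤ (b - a) * ∫ t in a..b, X t ^ 2 := by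
  rcases hab.eq_or_lt with rfl | hlt
  · simp
  have hX₁ : IntervalIntegrable X volume a b := hX.intervalIntegrable
  have hX₂ : IntervalIntegrable (fun t => X t ^ 2) volume a b := (hX.pow 2).intervalIntegrable
  set m := ∫ t in a..b, X t
  have hvar : 0 ≤ ∫ t in a..b, ((b - a) * X t - m) ^ 2 :=
    intervalIntegral.integral_nonneg hab fun t _ => sq_nonneg _
  have hexpand : ∫ t in a..b, ((b - a) * X t - m) ^ 2 =
      (b - a) * ((b - a) * (∫ t in a..b, X t ^ 2) - m ^ 2) := by
    have hpt (t : ℝ) : ((b - a) * X t - m) ^ 2 =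
        (b - a) ^ 2 * X t ^ 2 - 2 * (b - a) * m * X t + m ^ 2 := by ring
    simp only [hpt]
    rw [intervalIntegral.integral_add ((hX₂.const_mul _).sub (hX₁.const_mul _))
      intervalIntegrable_const, intervalIntegral.integral_sub (hX₂.const_mul _) (hX₁.const_mul _),
      intervalIntegral.integral_const_mul, intervalIntegral.integral_const_mul,
      intervalIntegral.integral_const, smul_eq_mul]
    ring
  rw [hexpand] at hvar
  exact sub_nonneg.1 (nonneg_of_mul_nonneg_right hvar (sub_pos.2 hlt))

lemma dist_sq_le_mul_integral_arc {U : Set ℂ} {φ : ℂ → ℂ} (hU : IsOpen U)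
    (hd : DifferentiableOn ℂ φ U) {c : ℂ} {r α β : ℝ} (hαβ : α ≤ β)
    (harc : MapsTo (circleMap c r) (uIcc α β) U) :
    dist (φ (circleMap c r α)) (φ (circleMap c r β)) ^ 2 ≤
      (β - α) * r ^ 2 * ∫ θ in α..β, ‖deriv φ (circleMap c r θ)‖ ^ 2 := by
  have hcont : ContinuousOn (fun θ => deriv φ (circleMap c r θ)) (uIcc α β) :=
    (hd.deriv hU).continuousOn.comp (continuous_circleMap c r).continuousOn harc
  have hvel : ContinuousOn (fun θ => deriv φ (circleMap c r θ) * (circleMap 0 r θ * I))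
      (uIcc α β) := hcont.mul (by fun_prop)
  have hftc := intervalIntegral.integral_eq_sub_of_hasDerivAt
    (fun θ hθ => (hd.differentiableAt (hU.mem_nhds (harc hθ))).hasDerivAt.comp θ
      (hasDerivAt_circleMap c r θ)) hvel.intervalIntegrable
  calc dist (φ (circleMap c r α)) (φ (circleMap c r β)) ^ 2
      = ‖∫ θ in α..β, deriv φ (circleMap c r θ) * (circleMap 0 r θ * I)‖ ^ 2 := by
        rw [hftc, dist_comm, dist_eq_norm]; rfl
    _ ≤ (∫ θ in α..β, ‖deriv φ (circleMap c r θ) * (circleMap 0 r θ * I)‖) ^ 2 := by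
        gcongr
        exact intervalIntegral.norm_integral_le_integral_norm hαβ
    _ ≤ (β - α) * ∫ θ in α..β, ‖deriv φ (circleMap c r θ) * (circleMap 0 r θ * I)‖ ^ 2 :=
        sq_integral_le_mul_integral_sq hαβ hvel.norm
    _ = (β - α) * r ^ 2 * ∫ θ in α..β, ‖deriv φ (circleMap c r θ)‖ ^ 2 := by
        simp only [norm_mul, norm_circleMap_zero, norm_I, mul_one, mul_pow, sq_abs,
          intervalIntegral.integral_mul_const]
        ring

lemma circleMap_mem_ball_one_iff {r θ : ℝ} (hr : 0 < r) :
    circleMap 0 r θ ∈ ball (1 : ℂ) 1 ↔ r < 2 * Real.cos θ := by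
  have hsq : ‖circleMap 0 r θ - 1‖ ^ 2 = r * (r - 2 * Real.cos θ) + 1 := by
    rw [← normSq_eq_norm_sq, normSq_apply, circleMap_zero]
    simp only [sub_re, sub_im, re_ofReal_mul, im_ofReal_mul, exp_ofReal_mul_I_re,
      exp_ofReal_mul_I_im, one_re, one_im]
    linear_combination r ^ 2 * Real.sin_sq_add_cos_sq θ
  rw [mem_ball, dist_eq_norm, ← sq_lt_one_iff₀ (norm_nonneg _), hsq, add_lt_iff_neg_right,
    mul_neg_iff, sub_neg]
  simp only [hr, hr.not_gt, true_and, false_and, or_false]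

lemma mapsTo_circleMap_ball_one {r α β : ℝ} (hr : 0 < r) (hα : -Real.pi ≤ α) (hβ : β ≤ Real.pi)
    (hαr : circleMap 0 r α ∈ ball (1 : ℂ) 1) (hβr : circleMap 0 r β ∈ ball (1 : ℂ) 1) :
    MapsTo (circleMap 0 r) (Icc α β) (ball 1 1) := by
  intro θ hθ
  rw [circleMap_mem_ball_one_iff hr] at hαr hβr ⊢
  rcases le_total 0 θ with h0 | h0
  · linarith [Real.cos_le_cos_of_nonneg_of_le_pi h0 hβ hθ.2]
  · have := Real.cos_le_cos_of_nonneg_of_le_pi (neg_nonneg.2 h0) (neg_le.1 hα) (neg_le_neg hθ.1)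
    rw [Real.cos_neg, Real.cos_neg] at this
    linarith

lemma ofReal_dist_sq_div_le_lintegral_arc {φ : ℂ → ℂ} (hd : DifferentiableOn ℂ φ (ball 1 1))
    {z w : ℂ} (hz : z ∈ ball (1 : ℂ) 1) (hw : w ∈ ball (1 : ℂ) 1) {r : ℝ} (hr : 0 < r)
    (hzr : ‖z‖ = r) (hwr : ‖w‖ = r) :
    ENNReal.ofReal (dist (φ z) (φ w) ^ 2 / (2 * Real.pi * r ^ 2)) ≤
      ∫⁻ θ in Ioo (-Real.pi) Real.pi, (ball (1 : ℂ) 1).indicator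
        (fun z => ENNReal.ofReal (‖deriv φ z‖ ^ 2)) (circleMap 0 r θ) := by
  wlog harg : arg z ≤ arg w generalizing z w
  · exact dist_comm (φ z) (φ w) ▸ this hw hz hwr hzr (le_of_not_ge harg)
  have hpolar {z : ℂ} (h : ‖z‖ = r) : circleMap 0 r (arg z) = z := by
    rw [circleMap_zero, ← h, norm_mul_exp_arg_mul_I]
  have harc := mapsTo_circleMap_ball_one hr (neg_pi_lt_arg z).le (arg_le_pi w)
    ((hpolar hzr).symm ▸ hz) ((hpolar hwr).symm ▸ hw)
  have hderiv : ContinuousOn (fun θ => deriv φ (circleMap 0 r θ)) (Icc (arg z) (arg w)) :=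
    (hd.deriv isOpen_ball).continuousOn.comp (continuous_circleMap 0 r).continuousOn harc
  have hcont : ContinuousOn (fun θ => ‖deriv φ (circleMap 0 r θ)‖ ^ 2) (Icc (arg z) (arg w)) :=
    hderiv.norm.pow 2
  have hlow := dist_sq_le_mul_integral_arc isOpen_ball hd harg (uIcc_of_le harg ▸ harc)
  have hJ : 0 ≤ ∫ θ in arg z..arg w, ‖deriv φ (circleMap 0 r θ)‖ ^ 2 :=
    intervalIntegral.integral_nonneg harg fun _ _ => sq_nonneg _
  have hlen : arg w - arg z ≤ 2 * Real.pi := by linarith [neg_pi_lt_arg z, arg_le_pi w]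
  rw [hpolar hzr, hpolar hwr] at hlow
  calc ENNReal.ofReal (dist (φ z) (φ w) ^ 2 / (2 * Real.pi * r ^ 2))
      ≤ ENNReal.ofReal (∫ θ in arg z..arg w, ‖deriv φ (circleMap 0 r θ)‖ ^ 2) := by
        refine ENNReal.ofReal_le_ofReal ((div_le_iff₀' (by positivity)).2 (hlow.trans ?_))
        gcongr
    _ = ∫⁻ θ in Ioc (arg z) (arg w), ENNReal.ofReal (‖deriv φ (circleMap 0 r θ)‖ ^ 2) := by
        rw [intervalIntegral.integral_of_le harg, ofReal_integral_eq_lintegral_ofReal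
          (hcont.integrableOn_Icc.mono_set Ioc_subset_Icc_self)
          (Eventually.of_forall fun _ => sq_nonneg _)]
    _ = ∫⁻ θ in Ioo (arg z) (arg w), ENNReal.ofReal (‖deriv φ (circleMap 0 r θ)‖ ^ 2) :=
        (setLIntegral_congr Ioo_ae_eq_Ioc).symm
    _ = ∫⁻ θ in Ioo (arg z) (arg w), (ball (1 : ℂ) 1).indicator
          (fun z => ENNReal.ofReal (‖deriv φ z‖ ^ 2)) (circleMap 0 r θ) :=
        setLIntegral_congr_fun measurableSet_Ioo fun θ hθ =>
          (indicator_of_mem (harc (Ioo_subset_Icc_self hθ))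
            fun z => ENNReal.ofReal (‖deriv φ z‖ ^ 2)).symm
    _ ≤ _ := lintegral_mono_set (Ioo_subset_Ioo (neg_pi_lt_arg z).le (arg_le_pi w))

lemma lintegral_eq_lintegral_circleMap {H : ℂ → ENNReal} (hH : Measurable H) :
    ∫⁻ z, H z =
      ∫⁻ r in Ioi 0, ENNReal.ofReal r * ∫⁻ θ in Ioo (-Real.pi) Real.pi, H (circleMap 0 r θ) := by
  have hsymm (p : ℝ × ℝ) : Complex.polarCoord.symm p = circleMap 0 p.1 p.2 := by
    rw [Complex.polarCoord_symm_apply, circleMap_zero, exp_mul_I, ofReal_cos, ofReal_sin]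
  have hmeas : Measurable fun p : ℝ × ℝ => ENNReal.ofReal p.1 * H (circleMap 0 p.1 p.2) :=
    measurable_fst.ennreal_ofReal.mul (hH.comp (by unfold circleMap; fun_prop))
  simp only [← Complex.lintegral_comp_polarCoord_symm, hsymm, smul_eq_mul]
  rw [polarCoord_target, Measure.volume_eq_prod, ← Measure.prod_restrict,
    lintegral_prod _ hmeas.aemeasurable]
  simp only [lintegral_const_mul' _ _ ENNReal.ofReal_ne_top]

-- In polar coordinates about the origin, larger oscillations on all small circles would make the
-- area of the image at least `∫ c / r dr = ∞`.
lemma exists_small_crosscut_at_zero {φ : ℂ → ℂ} (hd : DifferentiableOn ℂ φ (ball 1 1))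
    (hi : InjOn φ (ball 1 1)) (hb : IsBounded (φ '' ball 1 1)) {ε ρ : ℝ} (hε : 0 < ε)
    (hρ : 0 < ρ) :
    ∃ r, 0 < r ∧ r ≤ ρ ∧ ∀ z ∈ ball (1 : ℂ) 1, ∀ w ∈ ball (1 : ℂ) 1, ‖z‖ = r → ‖w‖ = r →
      dist (φ z) (φ w) ≤ ε := by
  by_contra! hosc
  set H : ℂ → ENNReal := (ball (1 : ℂ) 1).indicator fun z => ENNReal.ofReal (‖deriv φ z‖ ^ 2)
  have hHm : Measurable H :=
    ((measurable_deriv φ).norm.pow_const 2).ennreal_ofReal.indicator measurableSet_ball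
  have hfin : ∫⁻ z, H z < ⊤ := by
    rw [lintegral_indicator measurableSet_ball,
      lintegral_norm_deriv_sq_eq_volume_image isOpen_ball hd hi]
    exact hb.measure_lt_top
  rw [lintegral_eq_lintegral_circleMap hHm] at hfin
  refine hfin.ne (top_unique ?_)
  rw [← lintegral_ofReal_div_eq_top (div_pos (pow_pos hε 2) Real.two_pi_pos) hρ]
  refine (setLIntegral_mono' measurableSet_Ioc fun r hr => ?_).trans
    (lintegral_mono_set Ioc_subset_Ioi_self)
  obtain ⟨z, hz, w, hw, hzr, hwr, hzw⟩ := hosc r hr.1 hr.2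
  calc ENNReal.ofReal (ε ^ 2 / (2 * Real.pi) / r)
      = ENNReal.ofReal r * ENNReal.ofReal (ε ^ 2 / (2 * Real.pi * r ^ 2)) := by
        rw [← ENNReal.ofReal_mul hr.1.le]
        congr 1
        have := hr.1.ne'
        field_simp
    _ ≤ ENNReal.ofReal r * ENNReal.ofReal (dist (φ z) (φ w) ^ 2 / (2 * Real.pi * r ^ 2)) := by
        gcongr
    _ ≤ _ := by
        gcongr
        exact ofReal_dist_sq_div_le_lintegral_arc hd hz hw hr.1 hzr hwr

lemma exists_small_crosscut {ψ : ℂ → ℂ} (hd : DifferentiableOn ℂ ψ (ball 0 1))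
    (hi : InjOn ψ (ball 0 1)) (hb : IsBounded (ψ '' ball 0 1)) {a : ℂ} (ha : ‖a‖ = 1) {ε ρ : ℝ}
    (hε : 0 < ε) (hρ : 0 < ρ) :
    ∃ r, 0 < r ∧ r ≤ ρ ∧ ∀ z ∈ ball (0 : ℂ) 1 ∩ sphere a r, ∀ w ∈ ball (0 : ℂ) 1 ∩ sphere a r,
      dist (ψ z) (ψ w) ≤ ε := by
  have ha0 : a ≠ 0 := norm_ne_zero_iff.1 (ha ▸ one_ne_zero)
  have hmaps : MapsTo (fun z => a * (1 - z)) (ball (1 : ℂ) 1) (ball 0 1) := fun z hz => by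
    rwa [mem_ball_zero_iff, norm_mul, ha, one_mul, ← dist_eq_norm, dist_comm]
  have hinj : Function.Injective fun z : ℂ => a * (1 - z) :=
    (mul_right_injective₀ ha0).comp sub_right_injective
  obtain ⟨r, hr0, hr, hosc⟩ := exists_small_crosscut_at_zero (φ := ψ ∘ fun z => a * (1 - z))
    (hd.comp (by fun_prop) hmaps) (hi.comp hinj.injOn hmaps)
    (hb.subset (by rw [image_comp]; exact image_mono hmaps.image_subset)) hε hρ
  refine ⟨r, hr0, hr, fun z hz w hw => ?_⟩
  have hinv (z : ℂ) : a * (1 - (1 - z / a)) = z := by field_simp; ring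
  have hball {z : ℂ} (hz : z ∈ ball (0 : ℂ) 1) : 1 - z / a ∈ ball (1 : ℂ) 1 := by
    simpa [dist_eq_norm, ha] using hz
  have hnorm {z : ℂ} (hz : dist z a = r) : ‖1 - z / a‖ = r := by
    rw [← hz, dist_comm, dist_eq_norm, ← div_self ha0, ← sub_div, norm_div, ha, div_one]
  simpa only [Function.comp_apply, hinv] using
    hosc (1 - z / a) (hball hz.1) (1 - w / a) (hball hw.1) (hnorm hz.2) (hnorm hw.2)

/-! ### Continuous extension to the closed disk -/

lemma exists_isPreconnected_between_closedBall (X : Type*) [PseudoMetricSpace X] [CompactSpace X]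
    [LocallyConnectedSpace X] {ε : ℝ} (hε : 0 < ε) :
    ∃ δ > 0, ∀ x : X, ∃ α, IsClosed α ∧ IsPreconnected α ∧ closedBall x δ ⊆ α ∧
      α ⊆ closedBall x ε := by
  obtain ⟨δ, hδ, hcover⟩ := lebesgue_number_lemma_of_metric (isCompact_univ (X := X))
    (c := fun y => connectedComponentIn (ball y (ε / 2)) y)
    (fun _ => isOpen_ball.connectedComponentIn)
    fun y _ => mem_iUnion.2 ⟨y, mem_connectedComponentIn (mem_ball_self (half_pos hε))⟩
  refine ⟨δ / 2, half_pos hδ, fun x => ?_⟩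
  obtain ⟨y, hy⟩ := hcover x (mem_univ x)
  have hsub := connectedComponentIn_subset (ball y (ε / 2)) y
  have hxy : dist y x < ε / 2 := dist_comm x y ▸ hsub (hy (mem_ball_self hδ))
  exact ⟨closure (connectedComponentIn (ball y (ε / 2)) y), isClosed_closure,
    isPreconnected_connectedComponentIn.closure,
    (closedBall_subset_ball (half_lt_self hδ)).trans (hy.trans subset_closure),
    (closure_mono hsub).trans <| closure_ball_subset_closedBall.trans <|
      closedBall_subset_closedBall' (by linarith)⟩

lemma exists_closedBall_subset_isPreconnected_inter {X : Type*} [MetricSpace X] {C : Set X}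
    (hC : IsCompact C) [LocallyConnectedSpace C] {ε : ℝ} (hε : 0 < ε) :
    ∃ δ > 0, ∀ x, ∃ B, IsClosed B ∧ closedBall x δ ⊆ B ∧ B ⊆ closedBall x ε ∧
      IsPreconnected (C ∩ B) := by
  have : CompactSpace C := isCompact_iff_compactSpace.1 hC
  obtain ⟨η, hη, harc⟩ := exists_isPreconnected_between_closedBall C (half_pos hε)
  have hδη : min (η / 2) (ε / 2) ≤ η / 2 := min_le_left _ _
  have hδε : min (η / 2) (ε / 2) ≤ ε / 2 := min_le_right _ _
  refine ⟨min (η / 2) (ε / 2), by positivity, fun x => ?_⟩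
  rcases (C ∩ closedBall x (min (η / 2) (ε / 2))).eq_empty_or_nonempty with hxC | ⟨y, hyC, hyx⟩
  · exact ⟨closedBall x (min (η / 2) (ε / 2)), isClosed_closedBall, subset_rfl,
      closedBall_subset_closedBall (by linarith), hxC ▸ isPreconnected_empty⟩
  obtain ⟨α, hαc, hαp, hηα, hαε⟩ := harc ⟨y, hyC⟩
  have hαC : Subtype.val '' α ⊆ C := Subtype.coe_image_subset C α
  have hinter : C ∩ (closedBall x (min (η / 2) (ε / 2)) ∪ Subtype.val '' α) =
      Subtype.val '' α := by
    refine Subset.antisymm ?_ fun z hz => ⟨hαC hz, Or.inr hz⟩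
    rintro z ⟨hzC, hzx | hz⟩
    · refine ⟨⟨z, hzC⟩, hηα ?_, rfl⟩
      rw [mem_closedBall] at hzx hyx
      exact (dist_triangle_right z y x).trans (by linarith)
    · exact hz
  refine ⟨closedBall x (min (η / 2) (ε / 2)) ∪ Subtype.val '' α,
    isClosed_closedBall.union (hC.isClosed.isClosedMap_subtype_val _ hαc), subset_union_left,
    union_subset (closedBall_subset_closedBall (by linarith)) ?_,
    by rw [hinter]; exact hαp.image _ continuous_subtype_val.continuousOn⟩
  rintro _ ⟨z, hz, rfl⟩
  have hzy : dist (z : X) y ≤ ε / 2 := hαε hz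
  rw [mem_closedBall] at hyx
  exact (dist_triangle (z : X) y x).trans (by linarith)

section Conformal

variable {U N : Set ℂ} {ψ : ℂ → ℂ}

lemma disjoint_image_frontier_image (hU : IsOpen U) (hd : DifferentiableOn ℂ ψ U)
    (hi : InjOn ψ U) : Disjoint (ψ '' U) (frontier (ψ '' U)) :=
  (disjoint_frontier_iff_isOpen.2 (isOpen_image_of_injOn hU hd hi)).symm

lemma isOpen_image_inter (hU : IsOpen U) (hd : DifferentiableOn ℂ ψ U) (hi : InjOn ψ U)
    (hN : IsOpen N) : IsOpen (ψ '' (U ∩ N)) :=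
  isOpen_image_of_injOn (hU.inter hN) (hd.mono inter_subset_left) (hi.mono inter_subset_left)

lemma frontier_image_inter_subset (hU : IsOpen U) (hd : DifferentiableOn ℂ ψ U) (hi : InjOn ψ U)
    (hN : IsOpen N) :
    frontier (ψ '' (U ∩ N)) ⊆ frontier (ψ '' U) ∪ ψ '' (U ∩ frontier N) := by
  intro x hx
  rw [(isOpen_image_inter hU hd hi hN).frontier_eq] at hx
  by_cases hxU : x ∈ ψ '' U
  · obtain ⟨z, hz, rfl⟩ := hxU
    refine Or.inr ⟨z, ⟨hz, hN.frontier_eq ▸ ⟨?_, fun hzN => hx.2 ⟨z, ⟨hz, hzN⟩, rfl⟩⟩⟩, rfl⟩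
    by_contra hcl
    obtain ⟨_, ⟨w, hw, rfl⟩, ⟨v, hv, hvw⟩⟩ := mem_closure_iff.1 hx.1 _
      (isOpen_image_inter hU hd hi isClosed_closure.isOpen_compl) ⟨z, ⟨hz, hcl⟩, rfl⟩
    exact hw.2 (subset_closure (hi hv.1 hw.1 hvw ▸ hv.2))
  · rw [(isOpen_image_of_injOn hU hd hi).frontier_eq]
    exact Or.inl ⟨closure_mono (image_mono inter_subset_left) hx.1, hxU⟩

-- `C ∪ B`, with `C ∩ B` connected, does not separate two points of the image outside the disk.
lemma image_inter_subset_or_image_diff_subset (hU : IsOpen U) (hUc : IsPreconnected U)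
    (hd : DifferentiableOn ℂ ψ U) (hi : InjOn ψ U) (hb : IsBounded (ψ '' U)) (hN : IsOpen N)
    {B : Set ℂ} (hB : IsClosed B) (hNB : ψ '' (U ∩ frontier N) ⊆ B)
    (hCB : IsPreconnected (frontier (ψ '' U) ∩ B)) {x : ℂ} {ε : ℝ} (hBε : B ⊆ closedBall x ε) :
    ψ '' (U ∩ N) ⊆ closedBall x ε ∨ ψ '' (U \ N) ⊆ closedBall x ε := by
  by_contra! hcon
  obtain ⟨_, ⟨p, hp, rfl⟩, hpε⟩ := not_subset.1 hcon.1
  obtain ⟨_, ⟨q, hq, rfl⟩, hqε⟩ := not_subset.1 hcon.2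
  have hUC := disjoint_image_frontier_image hU hd hi
  have hqV : ψ q ∉ ψ '' (U ∩ N) ∪ (frontier (ψ '' U) ∪ B) := by
    rintro (⟨v, hv, hvq⟩ | hqC | hqB)
    · exact hq.2 (hi hv.1 hq.1 hvq ▸ hv.2)
    · exact disjoint_left.1 hUC (mem_image_of_mem ψ hq.1) hqC
    · exact hqε (hBε hqB)
  have hlogC := hasLog_div_of_isPreconnected
    (hb.isCompact_closure.of_isClosed_subset isClosed_frontier frontier_subset_closure)
    (hUc.image ψ hd.continuousOn) hUC (mem_image_of_mem ψ hp.1) (mem_image_of_mem ψ hq.1)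
  have hlogB {y : ℂ} (hy : y ∉ closedBall x ε) : HasLog B (fun z => z - y) :=
    hasLog_sub_of_subset_ball (hBε.trans (closedBall_subset_ball (by
      rwa [mem_closedBall, not_le, dist_comm] at hy)))
  refine not_hasLog_div_of_frontier_subset (isClosed_frontier.union hB)
    (hb.subset (image_mono inter_subset_left))
    ((frontier_image_inter_subset hU hd hi hN).trans (union_subset_union_right _ hNB))
    (mem_image_of_mem ψ hp) hqV (HasLog.union isClosed_frontier hB hCB hlogC ?_)
  simpa only [div_eq_mul_inv] using (hlogB hpε).mul (hlogB hqε).inv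

end Conformal

section Disk

variable {ψ : ℂ → ℂ}

lemma exists_image_inter_ball_subset_closedBall (hd : DifferentiableOn ℂ ψ (ball 0 1))
    (hi : InjOn ψ (ball 0 1)) (hb : IsBounded (ψ '' ball 0 1))
    [LocallyConnectedSpace (frontier (ψ '' ball 0 1))] {a : ℂ} (ha : ‖a‖ = 1) {ε : ℝ}
    (hε : 0 < ε) : ∃ r > 0, ∃ x, ψ '' (ball 0 1 ∩ ball a r) ⊆ closedBall x ε := by
  have h0 : (0 : ℂ) ∈ ball 0 1 := mem_ball_self one_pos
  have hfar : -a / 2 ∈ ball (0 : ℂ) 1 := by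
    rw [mem_ball_zero_iff, norm_div, norm_neg, ha]
    norm_num
  have ha0 : a ≠ 0 := norm_ne_zero_iff.1 (ha ▸ one_ne_zero)
  have hdist : 0 < dist (ψ 0) (ψ (-a / 2)) :=
    dist_pos.2 fun h => ha0 (by linear_combination 2 * hi h0 hfar h)
  obtain ⟨δ, hδ, hB⟩ := exists_closedBall_subset_isPreconnected_inter
    (hb.isCompact_closure.of_isClosed_subset isClosed_frontier frontier_subset_closure)
    (lt_min hε (div_pos hdist three_pos))
  obtain ⟨r, hr0, hr, hosc⟩ := exists_small_crosscut hd hi hb ha hδ one_half_pos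
  have hmid : ((1 - r : ℝ) : ℂ) * a ∈ ball (0 : ℂ) 1 ∩ sphere a r := by
    constructor
    · rw [mem_ball_zero_iff, norm_mul, ha, mul_one, norm_real, Real.norm_of_nonneg (by linarith)]
      linarith
    · rw [mem_sphere, dist_eq_norm, ofReal_sub, ofReal_one, sub_mul, one_mul, sub_sub_cancel_left,
        norm_neg, norm_mul, ha, mul_one, norm_real, Real.norm_of_nonneg hr0.le]
  obtain ⟨B, hBc, hδB, hBε, hCB⟩ := hB (ψ ((1 - r : ℝ) * a))
  have hsphere : ψ '' (ball 0 1 ∩ frontier (ball a r)) ⊆ B := by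
    rw [frontier_ball a hr0.ne']
    rintro _ ⟨z, hz, rfl⟩
    exact hδB (hosc z hz _ hmid)
  rcases image_inter_subset_or_image_diff_subset isOpen_ball (convex_ball _ _).isPreconnected hd hi
    hb isOpen_ball hBc hsphere hCB hBε with hsub | hsub
  · exact ⟨r, hr0, _, hsub.trans (closedBall_subset_closedBall (min_le_left _ _))⟩
  · have h0r : (0 : ℂ) ∉ ball a r := by
      rw [mem_ball, dist_comm, dist_zero_right, ha]
      linarith
    have hfarr : -a / 2 ∉ ball a r := by
      rw [mem_ball, dist_eq_norm, show -a / 2 - a = (-3 / 2 : ℂ) * a by ring, norm_mul, ha]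
      norm_num
      linarith
    have := (dist_triangle_right _ _ _).trans
      (add_le_add (hsub ⟨0, ⟨h0, h0r⟩, rfl⟩) (hsub ⟨_, ⟨hfar, hfarr⟩, rfl⟩))
    linarith [min_le_right ε (dist (ψ 0) (ψ (-a / 2)) / 3)]

lemma exists_diffContOnCl_extension (hd : DifferentiableOn ℂ ψ (ball 0 1))
    (hi : InjOn ψ (ball 0 1)) (hb : IsBounded (ψ '' ball 0 1))
    [LocallyConnectedSpace (frontier (ψ '' ball 0 1))] :
    ∃ Ψ : ℂ → ℂ, DiffContOnCl ℂ Ψ (ball 0 1) ∧ EqOn Ψ ψ (ball 0 1) := by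
  have heq : EqOn (extendFrom (ball 0 1) ψ) ψ (ball 0 1) := fun z hz =>
    extendFrom_eq (subset_closure hz) (hd.continuousOn z hz)
  refine ⟨extendFrom (ball 0 1) ψ,
    ⟨hd.congr heq, continuousOn_extendFrom subset_rfl fun a ha => ?_⟩, heq⟩
  rw [closure_ball _ one_ne_zero, mem_closedBall_zero_iff] at ha
  rcases ha.lt_or_eq with ha | ha
  · exact ⟨ψ a, hd.continuousOn a (mem_ball_zero_iff.2 ha)⟩
  have : (𝓝[ball 0 1] a).NeBot := mem_closure_iff_nhdsWithin_neBot.1 (by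
    rw [closure_ball _ one_ne_zero, mem_closedBall_zero_iff, ha])
  rw [← cauchy_map_iff_exists_tendsto, Metric.cauchy_iff]
  refine ⟨inferInstance, fun ε hε => ?_⟩
  obtain ⟨r, hr, x, hx⟩ :=
    exists_image_inter_ball_subset_closedBall hd hi hb ha (div_pos hε three_pos)
  refine ⟨ψ '' (ball 0 1 ∩ ball a r), image_mem_map
    (inter_mem self_mem_nhdsWithin (mem_nhdsWithin_of_mem_nhds (ball_mem_nhds _ hr))), ?_⟩
  intro y hy z hz
  linarith [dist_triangle_right y z x, mem_closedBall.1 (hx hy), mem_closedBall.1 (hx hz)]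

end Disk

/-! ### Boundary injectivity -/

section Boundary

variable {U H : Set ℂ} {Ψ : ℂ → ℂ}

lemma mapsTo_frontier (hU : IsOpen U) (hΨ : DiffContOnCl ℂ Ψ U) (hi : InjOn Ψ U) :
    MapsTo Ψ (frontier U) (frontier (Ψ '' U)) := by
  intro a ha
  rw [hU.frontier_eq] at ha
  rw [(isOpen_image_of_injOn hU hΨ.differentiableOn hi).frontier_eq]
  refine ⟨hΨ.continuousOn.image_closure (mem_image_of_mem Ψ ha.1), ?_⟩
  rintro ⟨z, hz, hza⟩
  obtain ⟨N, M, hN, hM, hzN, haM, hNM⟩ := t2_separation (ne_of_mem_of_not_mem hz ha.2)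
  have : (𝓝[U] a).NeBot := mem_closure_iff_nhdsWithin_neBot.1 ha.1
  have hlim : Tendsto Ψ (𝓝[U] a) (𝓝 (Ψ a)) := (hΨ.continuousOn a ha.1).mono subset_closure
  have hmem := hlim.eventually_mem
    ((isOpen_image_inter hU hΨ.differentiableOn hi hN).mem_nhds ⟨z, ⟨hz, hzN⟩, hza⟩)
  obtain ⟨w, ⟨⟨v, hv, hvw⟩, hwM⟩, hwU⟩ :=
    (hmem.and (mem_nhdsWithin_of_mem_nhds (hM.mem_nhds haM)) |>.and self_mem_nhdsWithin).exists
  exact disjoint_left.1 hNM (hi hv.1 hwU hvw ▸ hv.2) hwM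

lemma eq_of_mem_of_mem_closure (hU : IsOpen U) (hΨ : DiffContOnCl ℂ Ψ U) (hi : InjOn Ψ U)
    {z w : ℂ} (hz : z ∈ U) (hw : w ∈ closure U) (hzw : Ψ z = Ψ w) : z = w := by
  by_cases hwU : w ∈ U
  · exact hi hz hwU hzw
  · have hwf : w ∈ frontier U := hU.frontier_eq ▸ ⟨hw, hwU⟩
    exact absurd (mapsTo_frontier hU hΨ hi hwf) <| disjoint_left.1
      (disjoint_image_frontier_image hU hΨ.differentiableOn hi) (hzw ▸ mem_image_of_mem Ψ hz)

lemma injOn_closure (hU : IsOpen U) (hΨ : DiffContOnCl ℂ Ψ U) (hi : InjOn Ψ U)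
    (hif : InjOn Ψ (frontier U)) : InjOn Ψ (closure U) := by
  intro z hz w hw hzw
  by_cases hzU : z ∈ U
  · exact eq_of_mem_of_mem_closure hU hΨ hi hzU hw hzw
  by_cases hwU : w ∈ U
  · exact (eq_of_mem_of_mem_closure hU hΨ hi hwU hz hzw.symm).symm
  rw [hU.frontier_eq] at hif
  exact hif ⟨hz, hzU⟩ ⟨hw, hwU⟩ hzw

lemma isPreconnected_image_inter_union (hΨ : ContinuousOn Ψ (closure U)) (hH : IsOpen H)
    (hUH : IsPreconnected (U ∩ H)) {T : Set ℂ} (hT : IsPreconnected T) {u : ℂ}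
    (hu : u ∈ closure U ∩ H) (huT : Ψ u ∈ T) : IsPreconnected (Ψ '' (U ∩ H) ∪ T) := by
  have hucl : u ∈ closure (U ∩ H) := hH.closure_inter hu
  have hins := (hUH.subset_closure (subset_insert u _) (insert_subset hucl subset_closure)).image Ψ
    (hΨ.mono (insert_subset hu.1 (inter_subset_left.trans subset_closure)))
  have hunion := hins.union (Ψ u) (mem_image_of_mem Ψ (mem_insert _ _)) huT hT
  rwa [image_insert_eq, insert_union, insert_eq_of_mem (mem_union_right _ huT)] at hunion

lemma disjoint_image_diff_image_inter (hU : IsOpen U) (hΨ : DiffContOnCl ℂ Ψ U)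
    (hi : InjOn Ψ U) (S : Set ℂ) : Disjoint (Ψ '' (U \ S)) (Ψ '' (closure U ∩ S)) := by
  refine disjoint_left.2 ?_
  rintro _ ⟨z, hz, rfl⟩ ⟨w, hw, hwz⟩
  exact hz.2 (eq_of_mem_of_mem_closure hU hΨ hi hz.1 hw.1 hwz.symm ▸ hw.2)

-- If neither the frontier `C` nor the crosscut `Γ` separates `Ψ p` from `Ψ q`, then neither does
-- `C ∪ Γ`, because `C ∩ Γ` is connected; but `C ∪ Γ` contains the frontier of `Ψ '' (U ∩ H)`.
lemma not_isPreconnected_diff_crosscut (hU : IsOpen U) (hUc : IsPreconnected U)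
    (hUb : IsBounded U) (hΨ : DiffContOnCl ℂ Ψ U) (hi : InjOn Ψ U) (hH : IsOpen H) {S : Set ℂ}
    (hS : IsClosed S) (hHS : Disjoint H S) (hfr : frontier H ⊆ S) {x : ℂ}
    (hx : frontier (Ψ '' U) ∩ Ψ '' (closure U ∩ S) ⊆ {x}) {p q : ℂ} (hp : p ∈ U ∩ H)
    (hq : q ∈ U \ (H ∪ S)) : ¬ IsPreconnected (Ψ '' (U \ S) ∪ frontier (Ψ '' U) \ {x}) := by
  intro hV
  have hd := hΨ.differentiableOn
  have hb : IsBounded (Ψ '' U) := (hUb.isCompact_closure.image_of_continuousOn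
    hΨ.continuousOn).isBounded.subset (image_mono subset_closure)
  have hC : IsCompact (frontier (Ψ '' U)) :=
    hb.isCompact_closure.of_isClosed_subset isClosed_frontier frontier_subset_closure
  have hΓ : IsCompact (Ψ '' (closure U ∩ S)) := (hUb.isCompact_closure.inter_right hS)
    |>.image_of_continuousOn (hΨ.continuousOn.mono inter_subset_left)
  have hUC := disjoint_image_frontier_image hU hd hi
  have hUΓ := disjoint_image_diff_image_inter hU hΨ hi S
  have hqS : q ∈ U \ S := ⟨hq.1, fun hqS => hq.2 (Or.inr hqS)⟩
  have hlogC := hasLog_div_of_isPreconnected hC (hUc.image Ψ hd.continuousOn) hUC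
    (mem_image_of_mem Ψ hp.1) (mem_image_of_mem Ψ hq.1)
  have hlogΓ := hasLog_div_of_isPreconnected hΓ hV
    (hUΓ.union_left (disjoint_left.2 fun y hy hyΓ => hy.2 (hx ⟨hy.1, hyΓ⟩)))
    (Or.inl (mem_image_of_mem Ψ ⟨hp.1, disjoint_left.1 hHS hp.2⟩))
    (Or.inl (mem_image_of_mem Ψ hqS))
  have hfrontier : frontier (Ψ '' (U ∩ H)) ⊆ frontier (Ψ '' U) ∪ Ψ '' (closure U ∩ S) :=
    (frontier_image_inter_subset hU hd hi hH).trans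
      (union_subset_union_right _ (image_mono (inter_subset_inter subset_closure hfr)))
  refine not_hasLog_div_of_frontier_subset (hC.isClosed.union hΓ.isClosed)
    (hb.subset (image_mono inter_subset_left)) hfrontier (mem_image_of_mem Ψ hp) ?_
    (HasLog.union hC.isClosed hΓ.isClosed (subsingleton_singleton.anti hx).isPreconnected
      hlogC hlogΓ)
  rintro (⟨z, hz, hzq⟩ | hqC | hqΓ)
  · exact hq.2 (Or.inl (hi hz.1 hq.1 hzq ▸ hz.2))
  · exact disjoint_left.1 hUC (mem_image_of_mem Ψ hq.1) hqC
  · exact disjoint_left.1 hUΓ (mem_image_of_mem Ψ hqS) hqΓ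

end Boundary

-- Finitely many rotations of the arc cover the circle; the product of the rotated functions
-- vanishes on the circle, hence at the center.
lemma eq_zero_of_eqOn_arc {F : ℂ → ℂ} (hF : DiffContOnCl ℂ F (ball 0 1)) {O : Set ℂ}
    (hO : IsOpen O) (hne : (sphere 0 1 ∩ O).Nonempty)
    (h0 : ∀ z ∈ sphere (0 : ℂ) 1 ∩ O, F z = 0) : F 0 = 0 := by
  obtain ⟨u, hu, huO⟩ := hne
  have harc : (((↑) : Circle → ℂ) ⁻¹' O).Nonempty := ⟨(⟨u, hu⟩ : Circle), huO⟩
  obtain ⟨t, ht⟩ := (isCompact_univ (X := Circle)).exists_finite_cover_smul Circle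
    (hO.preimage (by fun_prop)) harc
  have hnorm (g : Circle) (z : ℂ) : ‖(g⁻¹ : Circle) * z‖ = ‖z‖ := by
    rw [norm_mul, Circle.norm_coe, one_mul]
  have hG (g : Circle) : DiffContOnCl ℂ (fun z => F ((g⁻¹ : Circle) * z)) (ball 0 1) :=
    hF.comp (Differentiable.diffContOnCl (by fun_prop)) fun z hz => by
      rwa [mem_ball_zero_iff, hnorm, ← mem_ball_zero_iff]
  have hprod : DiffContOnCl ℂ (fun z => ∏ g ∈ t, F ((g⁻¹ : Circle) * z)) (ball 0 1) :=
    ⟨DifferentiableOn.fun_finsetProd fun g _ => (hG g).differentiableOn,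
      continuousOn_finsetProd _ fun g _ => (hG g).continuousOn⟩
  have hsphere : ∀ z ∈ frontier (ball (0 : ℂ) 1), ‖∏ g ∈ t, F ((g⁻¹ : Circle) * z)‖ ≤ 0 := by
    intro z hz
    rw [frontier_ball _ one_ne_zero] at hz
    obtain ⟨g, hgt, hgz⟩ := mem_iUnion₂.1 (ht (mem_univ (⟨z, hz⟩ : Circle)))
    have hgO : ((g⁻¹ : Circle) * z : ℂ) ∈ O := mem_smul_set_iff_inv_smul_mem.1 hgz
    have hgs : ((g⁻¹ : Circle) * z : ℂ) ∈ sphere 0 1 := by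
      rwa [mem_sphere_zero_iff_norm, hnorm, ← mem_sphere_zero_iff_norm]
    rw [norm_le_zero_iff, Finset.prod_eq_zero hgt (h0 _ ⟨hgs, hgO⟩)]
  have hcenter := norm_le_of_forall_mem_frontier_norm_le isBounded_ball hprod hsphere
    (subset_closure (mem_ball_self one_pos))
  simp only [mul_zero, Finset.prod_const, norm_le_zero_iff] at hcenter
  exact eq_zero_of_pow_eq_zero hcenter

lemma exists_mem_sphere_ne {Ψ : ℂ → ℂ} (hΨ : DiffContOnCl ℂ Ψ (ball 0 1)) {x : ℂ}
    (hx : x ∉ Ψ '' ball 0 1) {O : Set ℂ} (hO : IsOpen O) (hne : (sphere 0 1 ∩ O).Nonempty) :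
    ∃ u ∈ sphere 0 1 ∩ O, Ψ u ≠ x := by
  by_contra! hcon
  exact hx ⟨0, mem_ball_self one_pos, sub_eq_zero.1 <| eq_zero_of_eqOn_arc (hΨ.sub_const x) hO hne
    fun z hz => sub_eq_zero.2 (hcon z hz)⟩

section Chord

open scoped RealInnerProductSpace

lemma exists_mem_sphere_inner_lt {E : Type*} [NormedAddCommGroup E] [InnerProductSpace ℝ E]
    {n a b : E} (hn : n ≠ 0) (ha : ‖a‖ = 1) (hb : ‖b‖ = 1) (hab : a ≠ b)
    (hnab : ⟪n, a⟫ = ⟪n, b⟫) : ∃ u ∈ sphere (0 : E) 1, ⟪n, a⟫ < ⟪n, u⟫ := by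
  have hn0 : ‖n‖ ≠ 0 := norm_ne_zero_iff.2 hn
  have hnu : ⟪n, ‖n‖⁻¹ • n⟫ = ‖n‖ := by
    rw [real_inner_smul_right, real_inner_self_eq_norm_mul_norm, inv_mul_cancel_left₀ hn0]
  have hle : ⟪n, a⟫ ≤ ‖n‖ := (real_inner_le_norm n a).trans (by rw [ha, mul_one])
  refine ⟨‖n‖⁻¹ • n, mem_sphere_zero_iff_norm.2 (norm_smul_inv_norm hn), ?_⟩
  rw [hnu]
  refine hle.lt_of_ne fun heq => hab ?_
  have hna := (inner_eq_norm_mul_iff_real (x := n) (y := a)).1 (by rw [heq, ha, mul_one])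
  have hnb := (inner_eq_norm_mul_iff_real (x := n) (y := b)).1 (by rw [← hnab, heq, hb, mul_one])
  rw [ha] at hna
  rw [hb] at hnb
  exact smul_right_injective E hn0 (hna.symm.trans hnb)

lemma eq_or_eq_of_inner_I_mul_eq {a b z : ℂ} (ha : ‖a‖ = 1) (hb : ‖b‖ = 1) (hz : ‖z‖ = 1)
    (hab : a ≠ b) (h : ⟪I * (b - a), z⟫ = ⟪I * (b - a), a⟫) : z = a ∨ z = b := by
  have hba : b - a ≠ 0 := sub_ne_zero.2 hab.symm
  obtain ⟨s, rfl⟩ : ∃ s : ℝ, z = a + s • (b - a) := by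
    have him : ((z - a) * conj (b - a)).im = 0 := by
      simp only [Complex.inner, mul_re, mul_im, I_re, I_im, conj_re, conj_im, sub_re, sub_im] at h ⊢
      linear_combination h
    have hreal : (((z - a) / (b - a)).re : ℂ) = (z - a) / (b - a) := Complex.ext (ofReal_re _) (by
      rw [ofReal_im, div_eq_mul_inv, inv_def, ← mul_assoc, im_mul_ofReal, him, zero_mul])
    exact ⟨((z - a) / (b - a)).re, by rw [real_smul, hreal, div_mul_cancel₀ _ hba, add_sub_cancel]⟩
  have hb2 := norm_add_sq_real a (b - a)
  have hz2 := norm_add_sq_real a (s • (b - a))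
  rw [add_sub_cancel, hb, ha] at hb2
  rw [hz, ha, real_inner_smul_right, norm_smul, Real.norm_eq_abs, mul_pow, sq_abs] at hz2
  have hs : s * (s - 1) * ‖b - a‖ ^ 2 = 0 := by linear_combination s * hb2 - hz2
  rcases mul_eq_zero.1 ((mul_eq_zero.1 hs).resolve_right (by positivity)) with hs0 | hs1
  · exact Or.inl (by rw [hs0, zero_smul, add_zero])
  · exact Or.inr (by rw [sub_eq_zero.1 hs1, one_smul, add_sub_cancel])

lemma exists_line_inter_sphere_subset {a b : ℂ} (ha : ‖a‖ = 1) (hb : ‖b‖ = 1) (hab : a ≠ b) :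
    ∃ (L : ℂ →L[ℝ] ℝ) (t : ℝ), (sphere 0 1 ∩ {z | t < L z}).Nonempty ∧
      (sphere 0 1 ∩ {z | L z < t}).Nonempty ∧ sphere 0 1 ∩ {z | L z = t} ⊆ {a, b} := by
  have hn : I * (b - a) ≠ 0 := mul_ne_zero I_ne_zero (sub_ne_zero.2 hab.symm)
  have hnab : ⟪I * (b - a), a⟫ = ⟪I * (b - a), b⟫ := by
    simp [Complex.inner]
    ring
  obtain ⟨u, hu, hau⟩ := exists_mem_sphere_inner_lt hn ha hb hab hnab
  obtain ⟨v, hv, hav⟩ := exists_mem_sphere_inner_lt (neg_ne_zero.2 hn) ha hb hab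
    (by rw [inner_neg_left, inner_neg_left, hnab])
  rw [inner_neg_left, inner_neg_left, neg_lt_neg_iff] at hav
  exact ⟨innerSL ℝ (I * (b - a)), ⟪I * (b - a), a⟫, ⟨u, hu, hau⟩, ⟨v, hv, hav⟩, fun z hz =>
    eq_or_eq_of_inner_I_mul_eq ha hb (mem_sphere_zero_iff_norm.1 hz.1) hab hz.2⟩

end Chord

section Disk

variable {Ψ : ℂ → ℂ}

lemma isPreconnected_image_side_union (hΨ : DiffContOnCl ℂ Ψ (ball 0 1))
    (hi : InjOn Ψ (ball 0 1)) {x : ℂ} (hx : x ∈ frontier (Ψ '' ball 0 1))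
    (hcut : IsPreconnected (frontier (Ψ '' ball 0 1) \ {x})) {H : Set ℂ} (hH : IsOpen H)
    (hHc : Convex ℝ H) (hne : (sphere 0 1 ∩ H).Nonempty) :
    (ball 0 1 ∩ H).Nonempty ∧ (frontier (Ψ '' ball 0 1) \ {x}).Nonempty ∧
      IsPreconnected (Ψ '' (ball 0 1 ∩ H) ∪ frontier (Ψ '' ball 0 1) \ {x}) := by
  have hdisj := disjoint_image_frontier_image isOpen_ball hΨ.differentiableOn hi
  obtain ⟨u, ⟨hu, huH⟩, hux⟩ := exists_mem_sphere_ne hΨ (disjoint_right.1 hdisj hx) hH hne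
  rw [← frontier_ball (0 : ℂ) one_ne_zero] at hu
  have hucl : u ∈ closure (ball 0 1) ∩ H := ⟨frontier_subset_closure hu, huH⟩
  have huC : Ψ u ∈ frontier (Ψ '' ball 0 1) \ {x} := ⟨mapsTo_frontier isOpen_ball hΨ hi hu, hux⟩
  exact ⟨closure_nonempty_iff.1 ⟨u, hH.closure_inter hucl⟩, ⟨_, huC⟩,
    isPreconnected_image_inter_union hΨ.continuousOn hH
      ((convex_ball 0 1).inter hHc).isPreconnected hcut hucl huC⟩

-- If `Ψ a = Ψ b`, the chord from `a` to `b` is mapped to a closed curve meeting the frontier only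
-- in that point, while the rest of the frontier joins the images of the two sides of the chord.
lemma injOn_sphere (hΨ : DiffContOnCl ℂ Ψ (ball 0 1)) (hi : InjOn Ψ (ball 0 1))
    (hcut : ∀ x ∈ frontier (Ψ '' ball 0 1), IsPreconnected (frontier (Ψ '' ball 0 1) \ {x})) :
    InjOn Ψ (sphere 0 1) := by
  intro a ha b hb hab
  by_contra hne
  have hfr : frontier (ball (0 : ℂ) 1) = sphere 0 1 := frontier_ball _ one_ne_zero
  have hdisj := disjoint_image_frontier_image isOpen_ball hΨ.differentiableOn hi
  have hx : Ψ a ∈ frontier (Ψ '' ball 0 1) := mapsTo_frontier isOpen_ball hΨ hi (hfr ▸ ha)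
  obtain ⟨L, t, hpos, hneg, hchord⟩ := exists_line_inter_sphere_subset
    (mem_sphere_zero_iff_norm.1 ha) (mem_sphere_zero_iff_norm.1 hb) hne
  obtain ⟨⟨p, hp⟩, ⟨y, hy⟩, hT₁⟩ := isPreconnected_image_side_union hΨ hi hx (hcut _ hx)
    (isOpen_lt continuous_const L.continuous) (convex_halfSpace_gt L.isLinear t) hpos
  obtain ⟨⟨q, hq⟩, -, hT₂⟩ := isPreconnected_image_side_union hΨ hi hx (hcut _ hx)
    (isOpen_lt L.continuous continuous_const) (convex_halfSpace_lt L.isLinear t) hneg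
  have hqt : L q < t := hq.2
  have hT := hT₁.union y (Or.inr hy) (Or.inr hy) hT₂
  have hsides : ball (0 : ℂ) 1 ∩ {z | t < L z} ∪ ball 0 1 ∩ {z | L z < t} =
      ball 0 1 \ {z | L z = t} := by
    rw [← inter_union_distrib_left, sdiff_eq]
    congr 1 with z
    exact (lt_or_lt_iff_ne (a := t)).trans ne_comm
  rw [← union_union_distrib_right, ← image_union, hsides] at hT
  refine not_isPreconnected_diff_crosscut isOpen_ball (convex_ball 0 1).isPreconnected
    isBounded_ball hΨ hi (isOpen_lt continuous_const L.continuous)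
    (isClosed_eq L.continuous continuous_const)
    (disjoint_left.2 fun z (hz : t < L z) => hz.ne')
    (frontier_lt_subset_eq continuous_const L.continuous |>.trans fun _ => Eq.symm) ?_ hp
    ⟨hq.1, not_or.2 ⟨hqt.not_gt, hqt.ne⟩⟩ hT
  rintro _ ⟨hzC, z, ⟨hz, hzt⟩, rfl⟩
  have hzs : z ∈ sphere (0 : ℂ) 1 := by
    rw [← hfr, isOpen_ball.frontier_eq]
    exact ⟨hz, fun hzD => disjoint_left.1 hdisj (mem_image_of_mem Ψ hzD) hzC⟩
  rcases hchord ⟨hzs, hzt⟩ with rfl | rfl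
  exacts [rfl, hab.symm]

lemma nonempty_homeomorph_closure_image (hΨ : DiffContOnCl ℂ Ψ (ball 0 1))
    (hi : InjOn Ψ (ball 0 1))
    (hcut : ∀ x ∈ frontier (Ψ '' ball 0 1), IsPreconnected (frontier (Ψ '' ball 0 1) \ {x})) :
    Nonempty (closure (Ψ '' ball 0 1) ≃ₜ closedBall (0 : ℂ) 1) := by
  have hinj : InjOn Ψ (closure (ball 0 1)) := injOn_closure isOpen_ball hΨ hi
    (frontier_ball (0 : ℂ) one_ne_zero ▸ injOn_sphere hΨ hi hcut)
  have himage := image_closure_of_isCompact isBounded_ball.isCompact_closure hΨ.continuousOn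
  have hcont := hΨ.continuousOn
  rw [closure_ball _ one_ne_zero] at hinj himage hcont
  have : CompactSpace (closedBall (0 : ℂ) 1) :=
    isCompact_iff_compactSpace.1 (isCompact_closedBall 0 1)
  have hbij : BijOn Ψ (closedBall 0 1) (closure (Ψ '' ball 0 1)) := himage ▸ hinj.bijOn_image
  exact ⟨(Continuous.homeoOfEquivCompactToT2 (f := hbij.equiv Ψ)
    (hcont.mapsToRestrict hbij.mapsTo)).symm⟩

end Disk

theorem nonempty_closure_homeomorph_closedBall {U : Set ℂ} (hU : IsOpen U) (hUc : IsConnected U)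
    (hb : IsBounded U) (hUcc : IsPreconnected Uᶜ) [LocallyConnectedSpace (frontier U)]
    (hcut : ∀ x ∈ frontier U, IsPreconnected (frontier U \ {x})) :
    Nonempty (closure U ≃ₜ closedBall (0 : ℂ) 1) := by
  obtain ⟨ψ, hd, hi, rfl⟩ := exists_riemann_map hU hUc hb hUcc
  obtain ⟨Ψ, hΨ, hΨψ⟩ := exists_diffContOnCl_extension hd hi hb
  rw [← hΨψ.image_eq] at hcut ⊢
  exact nonempty_homeomorph_closure_image hΨ (hi.congr hΨψ.symm) hcut

/-! ### Jordan domains -/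

section Jordan

variable {E : Type*} [NormedAddCommGroup E] [InnerProductSpace ℝ E]

lemma isPreconnected_compl_singleton_sphere {n : ℕ} [Fact (Module.finrank ℝ E = n + 1)]
    (v : sphere (0 : E) 1) : IsPreconnected ({v}ᶜ : Set (sphere (0 : E) 1)) := by
  rw [← stereographic'_source (n := n) v, ← (stereographic' n v).symm_image_target_eq_source]
  exact (stereographic'_target (n := n) v ▸ isPreconnected_univ).image _
    (stereographic' n v).continuousOn_symm

lemma isPreconnected_compl_singleton_circle (u : Circle) : IsPreconnected ({u}ᶜ : Set Circle) := by
  have : Fact (Module.finrank ℝ ℂ = 1 + 1) := ⟨finrank_real_complex⟩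
  exact isPreconnected_compl_singleton_sphere (n := 1) (E := ℂ) u

lemma nonempty_closure_homeomorph_closedBall_of_circle {U : Set ℂ} (hU : IsOpen U)
    (hUc : IsConnected U) (hb : IsBounded U) (hUcc : IsPreconnected Uᶜ)
    (k : Circle ≃ₜ frontier U) : Nonempty (closure U ≃ₜ closedBall (0 : ℂ) 1) := by
  have : LocallyConnectedSpace Circle :=
    ChartedSpace.locallyConnectedSpace (EuclideanSpace ℝ (Fin 1)) Circle
  have : LocallyConnectedSpace (frontier U) := k.symm.locallyConnectedSpace
  refine nonempty_closure_homeomorph_closedBall hU hUc hb hUcc fun x hx => ?_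
  have hk := ((isPreconnected_compl_singleton_circle (k.symm ⟨x, hx⟩)).image k
    k.continuous.continuousOn).image _ continuous_subtype_val.continuousOn
  rwa [image_compl_eq k.bijective, image_singleton, k.apply_symm_apply, image_val_compl,
    image_singleton] at hk

lemma nonempty_homeomorph_of_linearIsometryEquiv (e : ℂ ≃ₗᵢ[ℝ] E) {U : Set E} (hU : IsOpen U)
    (hUc : IsConnected U) (hb : IsBounded U) (hUcc : IsPreconnected Uᶜ)
    (k : Circle ≃ₜ frontier U) : Nonempty (frontier U ≃ₜ sphere (0 : E) 1) ∧
      Nonempty (closure U ≃ₜ closedBall (0 : E) 1) := by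
  let h : E ≃ₜ ℂ := e.symm.toHomeomorph
  obtain ⟨l⟩ := nonempty_closure_homeomorph_closedBall_of_circle (h.isOpen_image.2 hU)
    (hUc.image h h.continuous.continuousOn) (e.symm.lipschitz.isBounded_image hb)
    (h.image_compl U ▸ hUcc.image h h.continuous.continuousOn)
    (k.trans (h.image (frontier U)) |>.trans (Homeomorph.setCongr (h.image_frontier U)))
  have hsphere : e '' sphere 0 1 = sphere 0 1 := by rw [e.image_sphere, map_zero]
  have hball : e '' closedBall 0 1 = closedBall 0 1 := by rw [e.image_closedBall, map_zero]
  exact ⟨⟨k.symm.trans (e.toHomeomorph.image _) |>.trans (Homeomorph.setCongr hsphere)⟩,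
    ⟨h.image (closure U) |>.trans (Homeomorph.setCongr (h.image_closure U)) |>.trans l |>.trans
      (e.toHomeomorph.image _) |>.trans (Homeomorph.setCongr hball)⟩⟩

end Jordan

/-! ### Two arcs with common endpoints -/

section Arcs

open unitInterval

/-- The parameter `t ∈ [0, 1]` of a point `u` of the unit circle such that `u = exp (± π t I)`. -/
noncomputable def arcParam (u : Circle) : I :=
  ⟨Real.arccos (u : ℂ).re / Real.pi, div_nonneg (Real.arccos_nonneg _) Real.pi_pos.le,
    div_le_one_of_le₀ (Real.arccos_le_pi _) Real.pi_pos.le⟩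

lemma continuous_arcParam : Continuous arcParam := by
  unfold arcParam
  fun_prop

lemma cos_arcParam (u : Circle) : Real.cos (Real.pi * arcParam u) = (u : ℂ).re := by
  have hre := abs_le.1 ((abs_re_le_norm u).trans (Circle.norm_coe u).le)
  rw [arcParam, mul_div_cancel₀ _ Real.pi_pos.ne', Real.cos_arccos hre.1 hre.2]

lemma arcParam_eq_of_re_eq_cos {u : Circle} {t : I} (h : (u : ℂ).re = Real.cos (Real.pi * t)) :
    arcParam u = t := by
  have hπ := Real.pi_pos
  apply Subtype.ext
  change Real.arccos (u : ℂ).re / Real.pi = t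
  rw [h, Real.arccos_cos (mul_nonneg hπ.le t.2.1) (mul_le_of_le_one_right hπ.le t.2.2),
    mul_div_cancel_left₀ _ hπ.ne']

lemma re_sq_add_im_sq (u : Circle) : (u : ℂ).re ^ 2 + (u : ℂ).im ^ 2 = 1 := by
  rw [← u.normSq_coe, normSq_apply, sq, sq]

lemma arcParam_eq_zero_or_one_iff {u : Circle} :
    arcParam u = 0 ∨ arcParam u = 1 ↔ (u : ℂ).im = 0 := by
  have hu := re_sq_add_im_sq u
  refine ⟨fun h => ?_, fun h => ?_⟩
  · rw [← cos_arcParam] at hu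
    rcases h with h | h <;> simpa [h] using hu
  · rw [h, zero_pow two_ne_zero, add_zero, sq, mul_self_eq_one_iff] at hu
    exact hu.imp (fun hre => arcParam_eq_of_re_eq_cos (by simpa using hre))
      fun hre => arcParam_eq_of_re_eq_cos (by simpa using hre)

lemma eq_of_arcParam_eq {u v : Circle} (h : arcParam u = arcParam v)
    (him : 0 ≤ (u : ℂ).im ↔ 0 ≤ (v : ℂ).im) : u = v := by
  have hre : (u : ℂ).re = (v : ℂ).re := by rw [← cos_arcParam, h, cos_arcParam]
  have hsq := re_sq_add_im_sq u
  rw [hre, ← re_sq_add_im_sq v, add_left_cancel_iff, sq_eq_sq_iff_abs_eq_abs] at hsq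
  refine Circle.ext (Complex.ext hre ?_)
  rcases le_or_gt 0 (v : ℂ).im with hv | hv
  · rwa [abs_of_nonneg (him.2 hv), abs_of_nonneg hv] at hsq
  · rwa [abs_of_neg (not_le.1 fun hu => hv.not_ge (him.1 hu)), abs_of_neg hv, neg_inj] at hsq

lemma exists_arcParam_eq_and_im_nonneg (t : I) :
    ∃ u : Circle, arcParam u = t ∧ 0 ≤ (u : ℂ).im := by
  refine ⟨Circle.exp (Real.pi * t), arcParam_eq_of_re_eq_cos ?_, ?_⟩
  · rw [Circle.coe_exp, exp_ofReal_mul_I_re]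
  · rw [Circle.coe_exp, exp_ofReal_mul_I_im]
    exact Real.sin_nonneg_of_nonneg_of_le_pi (mul_nonneg Real.pi_pos.le t.2.1)
      (mul_le_of_le_one_right Real.pi_pos.le t.2.2)

variable {X : Type*} {f g : I → X}

open Classical in
/-- The closed curve running through `f` on the upper half circle and through `g` on the lower half
circle, for two curves `f` and `g` with the same endpoints. -/
noncomputable def gluedArcs (f g : I → X) (u : Circle) : X :=
  if 0 ≤ (u : ℂ).im then f (arcParam u) else g (arcParam u)

lemma gluedArcs_of_im_nonneg {u : Circle} (hu : 0 ≤ (u : ℂ).im) :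
    gluedArcs f g u = f (arcParam u) := if_pos hu

lemma gluedArcs_of_im_neg {u : Circle} (hu : (u : ℂ).im < 0) :
    gluedArcs f g u = g (arcParam u) := if_neg hu.not_ge

lemma apply_arcParam_eq (h0 : f 0 = g 0) (h1 : f 1 = g 1) {u : Circle} (hu : (u : ℂ).im = 0) :
    f (arcParam u) = g (arcParam u) := by
  rcases arcParam_eq_zero_or_one_iff.2 hu with h | h <;> rw [h] <;> assumption

lemma continuous_gluedArcs [TopologicalSpace X] (hf : Continuous f) (hg : Continuous g)
    (h0 : f 0 = g 0) (h1 : f 1 = g 1) : Continuous (gluedArcs f g) :=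
  Continuous.if_le (hf.comp continuous_arcParam) (hg.comp continuous_arcParam)
    continuous_const (by fun_prop) fun _ hu => apply_arcParam_eq h0 h1 hu.symm

lemma injective_gluedArcs (hf : Function.Injective f) (hg : Function.Injective g)
    (h0 : f 0 = g 0) (h1 : f 1 = g 1) (hfg : range f ∩ range g ⊆ {f 0, f 1}) :
    Function.Injective (gluedArcs f g) := by
  have hne : ∀ u v : Circle, (v : ℂ).im < 0 → f (arcParam u) ≠ g (arcParam v) := by
    intro u v hv huv
    refine hv.ne (arcParam_eq_zero_or_one_iff.1 ?_)
    rcases hfg ⟨⟨_, huv⟩, mem_range_self _⟩ with h | h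
    exacts [Or.inl (hg (h.trans h0)), Or.inr (hg (h.trans h1))]
  intro u v huv
  rcases le_or_gt 0 (u : ℂ).im with hu | hu <;> rcases le_or_gt 0 (v : ℂ).im with hv | hv
  · rw [gluedArcs_of_im_nonneg hu, gluedArcs_of_im_nonneg hv] at huv
    exact eq_of_arcParam_eq (hf huv) (iff_of_true hu hv)
  · rw [gluedArcs_of_im_nonneg hu, gluedArcs_of_im_neg hv] at huv
    exact absurd huv (hne u v hv)
  · rw [gluedArcs_of_im_neg hu, gluedArcs_of_im_nonneg hv] at huv
    exact absurd huv.symm (hne v u hu)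
  · rw [gluedArcs_of_im_neg hu, gluedArcs_of_im_neg hv] at huv
    exact eq_of_arcParam_eq (hg huv) (iff_of_false hu.not_ge hv.not_ge)

lemma range_gluedArcs (h0 : f 0 = g 0) (h1 : f 1 = g 1) :
    range (gluedArcs f g) = range f ∪ range g := by
  refine Subset.antisymm ?_ (union_subset ?_ ?_)
  · rintro _ ⟨u, rfl⟩
    exact (ite_eq_or_eq _ _ _).imp (fun h => ⟨_, h.symm⟩) fun h => ⟨_, h.symm⟩
  · rintro _ ⟨t, rfl⟩
    obtain ⟨u, rfl, hu⟩ := exists_arcParam_eq_and_im_nonneg t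
    exact ⟨u, gluedArcs_of_im_nonneg hu⟩
  · rintro _ ⟨t, rfl⟩
    obtain ⟨u, rfl, hu⟩ := exists_arcParam_eq_and_im_nonneg t
    have hinv : arcParam u⁻¹ = arcParam u := arcParam_eq_of_re_eq_cos (by
      rw [cos_arcParam, Circle.coe_inv_eq_conj, conj_re])
    have him : (u⁻¹ : Circle).1.im = -(u : ℂ).im := by
      rw [Circle.coe_inv_eq_conj, conj_im]
    refine ⟨u⁻¹, ?_⟩
    rcases hu.eq_or_lt with hu | hu
    · rw [gluedArcs_of_im_nonneg (by rw [him, ← hu, neg_zero]), hinv,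
        apply_arcParam_eq h0 h1 hu.symm]
    · rw [gluedArcs_of_im_neg (by rwa [him, neg_lt_zero]), hinv]

lemma nonempty_circle_homeomorph_union_range [TopologicalSpace X] [T2Space X]
    (hf : Continuous f) (hg : Continuous g) (hfi : Function.Injective f)
    (hgi : Function.Injective g) (h0 : f 0 = g 0) (h1 : f 1 = g 1)
    (hfg : range f ∩ range g ⊆ {f 0, f 1}) :
    Nonempty (Circle ≃ₜ (range f ∪ range g : Set X)) :=
  ⟨((continuous_gluedArcs hf hg h0 h1).isClosedEmbedding
    (injective_gluedArcs hfi hgi h0 h1 hfg)).isEmbedding.toHomeomorph.trans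
    (Homeomorph.setCongr (range_gluedArcs h0 h1))⟩

end Arcs

lemma compl_eq_closure_of_frontier_eq {X : Type*} [TopologicalSpace X] {U V : Set X}
    (hU : IsOpen U) (hUV : Disjoint U V) (hfr : frontier U = frontier V)
    (hcover : univ = U ∪ V ∪ frontier U) : Uᶜ = closure V := by
  rw [closure_eq_self_union_frontier, ← hfr]
  exact Subset.antisymm (compl_subset_iff_union.2 (by rw [hcover, union_assoc]))
    (union_subset hUV.subset_compl_left (disjoint_frontier_iff_isOpen.2 hU).subset_compl_right)

end PlaneTopology

theorem circle_and_disk_of_two_arcs_general {E : Type*} [NormedAddCommGroup E]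
    [InnerProductSpace ℝ E] (hE : Module.finrank ℝ E = 2) {U : Set E} (hU : IsOpen U)
    (hUc : IsConnected U) (hb : Bornology.IsBounded U) (hUcc : IsPreconnected Uᶜ)
    {f g : unitInterval → E} (hf : Continuous f) (hg : Continuous g)
    (hfi : Function.Injective f) (hgi : Function.Injective g) (h0 : f 0 = g 0) (h1 : f 1 = g 1)
    (hunion : frontier U = Set.range f ∪ Set.range g)
    (hinter : Set.range f ∩ Set.range g ⊆ {f 0, f 1}) :
    Nonempty (frontier U ≃ₜ Metric.sphere (0 : E) 1) ∧
      Nonempty (closure U ≃ₜ Metric.closedBall (0 : E) 1) := by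
  have : FiniteDimensional ℝ E := .of_finrank_pos (hE ▸ two_pos)
  obtain ⟨k⟩ :=
    PlaneTopology.nonempty_circle_homeomorph_union_range hf hg hfi hgi h0 h1 hinter
  exact PlaneTopology.nonempty_homeomorph_of_linearIsometryEquiv
    ((stdOrthonormalBasis ℝ ℂ).equiv (stdOrthonormalBasis ℝ E)
      (finCongr (Complex.finrank_real_complex.trans hE.symm)))
    hU hUc hb hUcc (k.trans (Homeomorph.setCongr hunion.symm))

/-- If the plane decomposes as `U₁ ∪ U₂ ∪ C` with `U₁` bounded and `U₂` unbounded disjoint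
open connected sets, `C = ∂U₁ = ∂U₂` compact, every point of `C` accessible from both sides,
and `C` is the union of two arcs meeting exactly in their two common endpoints, then `C` is
homeomorphic to the circle and the closure of `U₁` is homeomorphic to the closed disk. -/
theorem circle_and_disk_of_two_arcs
    (U₁ U₂ C : Set (EuclideanSpace ℝ (Fin 2)))
    (hcover : Set.univ = U₁ ∪ U₂ ∪ C) (hdisj : Disjoint U₁ U₂)
    (ho₁ : IsOpen U₁) (ho₂ : IsOpen U₂)
    (hc₁ : IsConnected U₁) (hc₂ : IsConnected U₂)
    (hb₁ : Bornology.IsBounded U₁) (hb₂ : ¬ Bornology.IsBounded U₂)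
    (hC : IsCompact C) (hf₁ : C = frontier U₁) (hf₂ : C = frontier U₂)
    (hacc₁ : ∀ x ∈ C, Accessible U₁ x) (hacc₂ : ∀ x ∈ C, Accessible U₂ x)
    (K₁ K₂ : Set (EuclideanSpace ℝ (Fin 2)))
    (f g : unitInterval → EuclideanSpace ℝ (Fin 2))
    (hfc : Continuous f) (hfi : Function.Injective f) (hfr : Set.range f = K₁)
    (hgc : Continuous g) (hgi : Function.Injective g) (hgr : Set.range g = K₂)
    (hends0 : f 0 = g 0) (hends1 : f 1 = g 1) (hendsne : f 0 ≠ f 1)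
    (hunion : C = K₁ ∪ K₂) (hinter : K₁ ∩ K₂ = {f 0, f 1}) :
    Nonempty (C ≃ₜ Metric.sphere (0 : EuclideanSpace ℝ (Fin 2)) 1) ∧
    Nonempty ((closure U₁) ≃ₜ Metric.closedBall (0 : EuclideanSpace ℝ (Fin 2)) 1) := by
  subst hf₁ hfr hgr
  exact circle_and_disk_of_two_arcs_general finrank_euclideanSpace_fin ho₁ hc₁ hb₁
    (PlaneTopology.compl_eq_closure_of_frontier_eq ho₁ hdisj hf₂ hcover ▸
      hc₂.isPreconnected.closure)
    hfc hgc hfi hgi hends0 hends1 hunion hinter.subset
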